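/- arXiv:2310.14742 — 2 statements merged into one kernel-verified Lean document; each statement's English description precedes it below -/
import Mathlib

section
/- Let d ≥ 3 and let D ⊂ ℝ^d be a hyperbolic convex domain such that the metric space (D, ρ_D) is Gromov hyperbolic. Then every conformal harmonic map f : 𝔻 → ∂D is constant. -/
/-!
Suppose `f : 𝔻 → ∂D` is conformal harmonic and not constant. Let `{l = c}` be a supporting
hyperplane of `D` at `f 0`. By the maximum principle (`apply_eq_of_max`) the image of `f` lies in
the face `closure D ∩ {l = c}`, and by conformality it is not contained in a line
(`const_of_mem_line`). Hence the face contains a triangle, and so a flat round disk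
(`exists_flat_disk`). Hyperbolicity excludes affine 2-planes in `closure D`, so some ray in the
plane of the disk, issued from its centre, leaves `closure D` at a point `ξ` of the face
(`exists_plane_exit`). Let `v` be the vector from `ξ` to the centre.

Fix `o ∈ D` and consider the points `conePt ξ v o a s = (1 - s)(ξ + a v) + s o` of `D`. Explicit
flat disks show that halving `s` or halving `a` costs a bounded minimal distance
(`minDist_vertical_le`, `minDist_horizontal_le`). Conversely, for each half-space `{l < c} ⊇ D`
Harnack's inequality makes `log (c - l) / 2` a 1-Lipschitz function
(`abs_log_sub_log_le_minDist`). Applied to the face hyperplane, this controls `log s`; applied to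
a hyperplane separating `D` from a point just beyond `ξ` on the ray, it controls `log a`. So
arbitrarily large squares in the plane with coordinates `(log a, log s)` embed quasi-isometrically
in `D`, which Gromov hyperbolicity forbids (`not_gromov_of_flat_corner`). In detail, take a point
`z` at the middle height of a near-geodesic between opposite corners. The two boundary paths of
the square joining these corners both pass near `z` up to an error logarithmic in the side length
(`exists_near_point`, by bisection of the paths), while they meet the middle region only along
opposite sides, whose distance is linear in the side length.
-/

open scoped RealInnerProductSpace ENNReal
open Metric Set Filter

noncomputable section

/-- Euclidean space `ℝ^d`. -/
abbrev Euc (d : ℕ) := EuclideanSpace ℝ (Fin d)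

/-- The open unit disk in `ℝ²`. -/
def unitDisk : Set (Euc 2) := Metric.ball 0 1

/-- Partial derivative of `f` at `z` in the `i`-th coordinate direction. -/
def pd {d : ℕ} (i : Fin 2) (f : Euc 2 → Euc d) (z : Euc 2) : Euc d :=
  fderiv ℝ f z (EuclideanSpace.single i 1)

/-- `f` is a conformal harmonic map on the unit disk: it is `C²`, its (vector)
Laplacian vanishes (equivalently, every component is harmonic), and at each point
its two partial derivatives are orthogonal and of equal norm. -/
def ConformalHarmonicOnDisk {d : ℕ} (f : Euc 2 → Euc d) : Prop :=
  ContDiffOn ℝ 2 f unitDisk ∧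
  (∀ z ∈ unitDisk,
    fderiv ℝ (pd 0 f) z (EuclideanSpace.single 0 1)
      + fderiv ℝ (pd 1 f) z (EuclideanSpace.single 1 1) = 0) ∧
  (∀ z ∈ unitDisk, ‖pd 0 f z‖ = ‖pd 1 f z‖ ∧ ⟪pd 0 f z, pd 1 f z⟫ = 0)

/-- The minimal (Forstnerič–Kalaj) metric of a domain `D ⊆ ℝ^d`:
`g_D(x,v) = inf {1/r : r > 0, f ∈ CH(𝔻, D), f 0 = x, f_x 0 = r • v}`. -/
def minMetric {d : ℕ} (D : Set (Euc d)) (x v : Euc d) : ℝ :=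
  sInf {c : ℝ | ∃ r : ℝ, 0 < r ∧ c = 1 / r ∧
    ∃ f : Euc 2 → Euc d, ConformalHarmonicOnDisk f ∧ (∀ z ∈ unitDisk, f z ∈ D) ∧
      f 0 = x ∧ pd 0 f 0 = r • v}

/-- `γ` is a piecewise `C¹` curve on `[a, b]`. -/
def PiecewiseC1On {d : ℕ} (γ : ℝ → Euc d) (a b : ℝ) : Prop :=
  ContinuousOn γ (Set.Icc a b) ∧
  ∃ (n : ℕ) (t : Fin (n + 2) → ℝ), Monotone t ∧ t 0 = a ∧ t (Fin.last (n + 1)) = b ∧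
    ∀ i : Fin (n + 1), ContDiffOn ℝ 1 γ (Set.Icc (t i.castSucc) (t i.succ))

/-- The minimal pseudodistance `ρ_D`: infimum of minimal lengths of piecewise `C¹`
curves in `D` joining `x` to `y`. -/
def minDist {d : ℕ} (D : Set (Euc d)) (x y : Euc d) : ℝ :=
  sInf {L : ℝ | ∃ γ : ℝ → Euc d, PiecewiseC1On γ 0 1 ∧
    (∀ t ∈ Set.Icc (0:ℝ) 1, γ t ∈ D) ∧ γ 0 = x ∧ γ 1 = y ∧
    L = ∫ t in (0:ℝ)..(1:ℝ), minMetric D (γ t) (deriv γ t)}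

/-- The Gromov product `(x|y)_o` with respect to the minimal pseudodistance of `D`. -/
def gromovProd {d : ℕ} (D : Set (Euc d)) (o x y : Euc d) : ℝ :=
  (minDist D x o + minDist D y o - minDist D x y) / 2

/-- `D` is hyperbolic: the minimal pseudodistance is a genuine distance. -/
def MinHyperbolic {d : ℕ} (D : Set (Euc d)) : Prop :=
  ∀ x ∈ D, ∀ y ∈ D, x ≠ y → 0 < minDist D x y

/-- The Hessian quadratic form of `u` at `x` in direction `v`. -/
def hessQ {d : ℕ} (u : Euc d → ℝ) (x v : Euc d) : ℝ :=
  fderiv ℝ (fun y => fderiv ℝ u y v) x v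

/-- `D` is a bounded domain with `C²` boundary, described by a `C²` defining
function `u` on a neighborhood `U` of `∂D` with nonvanishing differential. -/
def IsC2BoundedDomain {d : ℕ} (D : Set (Euc d)) : Prop :=
  IsOpen D ∧ IsConnected D ∧ Bornology.IsBounded D ∧
  ∃ (U : Set (Euc d)) (u : Euc d → ℝ), IsOpen U ∧ frontier D ⊆ U ∧ ContDiffOn ℝ 2 u U ∧
    D ∩ U = {x | x ∈ U ∧ u x < 0} ∧ frontier D = {x | x ∈ U ∧ u x = 0} ∧
    ∀ x ∈ frontier D, fderiv ℝ u x ≠ 0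

/-- `D` is a bounded strongly minimally convex domain: it has a `C²` defining function
which is strongly minimally plurisubharmonic near `∂D`, i.e. the trace of its Hessian
on every 2-plane (spanned by an orthonormal pair `v, w`) is strictly positive. -/
def IsStronglyMinimallyConvex {d : ℕ} (D : Set (Euc d)) : Prop :=
  IsOpen D ∧ IsConnected D ∧ Bornology.IsBounded D ∧
  ∃ (U : Set (Euc d)) (u : Euc d → ℝ), IsOpen U ∧ frontier D ⊆ U ∧ ContDiffOn ℝ 2 u U ∧
    D ∩ U = {x | x ∈ U ∧ u x < 0} ∧ frontier D = {x | x ∈ U ∧ u x = 0} ∧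
    (∀ x ∈ frontier D, fderiv ℝ u x ≠ 0) ∧
    (∀ x ∈ U, ∀ v w : Euc d, ‖v‖ = 1 → ‖w‖ = 1 → ⟪v, w⟫ = 0 →
      0 < hessQ u x v + hessQ u x w)

/-- `D` is a bounded strongly convex domain: convex, with a `C²` defining function whose
Hessian is positive definite on the tangent space at every boundary point
(equivalently, all principal curvatures of `∂D` w.r.t. the inner normal are positive). -/
def IsStronglyConvexDomain {d : ℕ} (D : Set (Euc d)) : Prop :=
  IsOpen D ∧ IsConnected D ∧ Bornology.IsBounded D ∧ Convex ℝ D ∧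
  ∃ (U : Set (Euc d)) (u : Euc d → ℝ), IsOpen U ∧ frontier D ⊆ U ∧ ContDiffOn ℝ 2 u U ∧
    D ∩ U = {x | x ∈ U ∧ u x < 0} ∧ frontier D = {x | x ∈ U ∧ u x = 0} ∧
    (∀ x ∈ frontier D, fderiv ℝ u x ≠ 0) ∧
    (∀ ξ ∈ frontier D, ∀ w : Euc d, w ≠ 0 → fderiv ℝ u ξ w = 0 → 0 < hessQ u ξ w)

/-- For `x ∈ D` with nearest boundary point `p`, the outer unit normal direction
`n_{π(x)} = (p - x)/‖p - x‖`. -/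
def nvec {d : ℕ} (x p : Euc d) : Euc d := ‖p - x‖⁻¹ • (p - x)

/-- Normal component of `v` at `x` with nearest boundary point `p`. -/
def vN {d : ℕ} (x p v : Euc d) : Euc d := ⟪v, nvec x p⟫ • nvec x p

/-- Tangential component of `v` at `x` with nearest boundary point `p`. -/
def vT {d : ℕ} (x p v : Euc d) : Euc d := v - vN x p v

/-- The intrinsic distance `H` on the boundary `∂D`: infimum of Euclidean lengths of
piecewise `C¹` curves in `∂D` joining two boundary points. -/
def bdist {d : ℕ} (D : Set (Euc d)) (ξ η : Euc d) : ℝ :=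
  sInf {L : ℝ | ∃ α : ℝ → Euc d, PiecewiseC1On α 0 1 ∧
    (∀ t ∈ Set.Icc (0:ℝ) 1, α t ∈ frontier D) ∧ α 0 = ξ ∧ α 1 = η ∧
    L = ∫ t in (0:ℝ)..(1:ℝ), ‖deriv α t‖}

/-- `h(x) = δ_D(x)^{1/2}`. -/
def hfun {d : ℕ} (D : Set (Euc d)) (x : Euc d) : ℝ :=
  Real.sqrt (Metric.infDist x (frontier D))

/-- The length of a curve with respect to the boundary Finsler metric
`F(x,v) = ‖v_N‖/(2 δ_D(x)) + ‖v_T‖/δ_D(x)^{1/2}`. -/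
def Flen {d : ℕ} (D : Set (Euc d)) (π : Euc d → Euc d) (γ : ℝ → Euc d) : ℝ :=
  ∫ t in (0:ℝ)..(1:ℝ),
    (‖vN (γ t) (π (γ t)) (deriv γ t)‖ / (2 * Metric.infDist (γ t) (frontier D))
      + ‖vT (γ t) (π (γ t)) (deriv γ t)‖ / Real.sqrt (Metric.infDist (γ t) (frontier D)))

/-- The filling Finsler metric `F`: the boundary Finsler metric on
`N = {δ_D ≤ ε}` and `c‖v‖` elsewhere. -/
def Fmet {d : ℕ} (D : Set (Euc d)) (π : Euc d → Euc d) (ε c : ℝ) (x v : Euc d) : ℝ :=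
  if Metric.infDist x (frontier D) ≤ ε then
    ‖vN x (π x) v‖ / (2 * Metric.infDist x (frontier D))
      + ‖vT x (π x) v‖ / Real.sqrt (Metric.infDist x (frontier D))
  else c * ‖v‖

/-- The intrinsic distance `d_F` associated to the filling Finsler metric `F`. -/
def dF {d : ℕ} (D : Set (Euc d)) (π : Euc d → Euc d) (ε c : ℝ) (x y : Euc d) : ℝ :=
  sInf {L : ℝ | ∃ γ : ℝ → Euc d, PiecewiseC1On γ 0 1 ∧
    (∀ t ∈ Set.Icc (0:ℝ) 1, γ t ∈ D) ∧ γ 0 = x ∧ γ 1 = y ∧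
    L = ∫ t in (0:ℝ)..(1:ℝ), Fmet D π ε c (γ t) (deriv γ t)}

/-- The hyperbolic filling distance
`d_H(x,y) = 2 log((H(π x, π y) + h(x) ∨ h(y)) / √(h(x) h(y)))`. -/
def dH {d : ℕ} (D : Set (Euc d)) (π : Euc d → Euc d) (x y : Euc d) : ℝ :=
  2 * Real.log ((bdist D (π x) (π y) + max (hfun D x) (hfun D y)) /
    Real.sqrt (hfun D x * hfun D y))

/-- `δ̂_D(x,v)`: the supremum over 2-dimensional linear subspaces `Λ ∋ v` of the
distance (in `ℝ≥0∞`, so `∞` if `x + Λ ⊆ D`) from `x` to `(x + Λ) \ D`. -/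
def deltaHat {d : ℕ} (D : Set (Euc d)) (x v : Euc d) : ℝ≥0∞ :=
  ⨆ (Λ : Submodule ℝ (Euc d)) (_ : Module.finrank ℝ Λ = 2) (_ : v ∈ Λ),
    ⨅ (y : Euc d) (_ : y - x ∈ Λ ∧ y ∉ D), edist x y

/-- The positive parameter at which the ray `t ↦ x + t • v` exits the convex domain `D`
(equal to `0`, by the `sInf ∅ = 0` convention, when the ray stays in `D`,
i.e. when the corresponding chord endpoint is the point at infinity). -/
def chordParam {d : ℕ} (D : Set (Euc d)) (x v : Euc d) : ℝ :=
  sInf {s : ℝ | 0 < s ∧ x + s • v ∉ D}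

/-- The Hilbert Finsler metric `h_D(x,v) = (‖v‖/2)(1/‖x-a‖ + 1/‖x-b‖)` of a convex
domain, with the convention `1/‖x-∞‖ = 0` (here `‖x-b‖ = chordParam D x v • ‖v‖` and
`‖x-a‖ = chordParam D x (-v) • ‖v‖`, and division by zero is zero). -/
def hilbertFinsler {d : ℕ} (D : Set (Euc d)) (x v : Euc d) : ℝ :=
  (1/2) * (1 / chordParam D x v + 1 / chordParam D x (-v))

/- The Hilbert distance of a convex domain: for `x ≠ y`,
`H_D(x,y) = ½ log((‖x-b‖ ‖y-a‖)/(‖x-a‖ ‖y-b‖))` where `a, x, y, b` are aligned on the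
chord through `x, y`, with the convention that ratios involving the point at infinity
(detected by `chordParam = 0`) are equal to `1`. -/
open Classical in
def hilbertDist {d : ℕ} (D : Set (Euc d)) (x y : Euc d) : ℝ :=
  if x = y then 0 else
    (1/2) * Real.log
      ((if chordParam D x (y - x) = 0 then 1
        else chordParam D x (y - x) / (chordParam D x (y - x) - 1)) *
       (if chordParam D x (x - y) = 0 then 1
        else (1 + chordParam D x (x - y)) / chordParam D x (x - y)))

/-! ### Harmonic functions along conformal harmonic disks -/

open InnerProductSpace Topology in
/-- Under the identification `ℂ ≃ ℝ²`, the hand-written Laplacian condition of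
`ConformalHarmonicOnDisk` is Mathlib's harmonicity. -/
lemma harmonicOnNhd_comp_repr {d : ℕ} {f : Euc 2 → Euc d} (hf : ConformalHarmonicOnDisk f) :
    HarmonicOnNhd (fun z : ℂ => f (Complex.orthonormalBasisOneI.repr z)) (ball 0 1) := by
  obtain ⟨hC, hL, -⟩ := hf
  have hopen : IsOpen unitDisk := isOpen_ball
  set e : ℂ ≃L[ℝ] Euc 2 := Complex.orthonormalBasisOneI.repr.toContinuousLinearEquiv with he
  have hmem : ∀ z ∈ ball (0 : ℂ) 1, e z ∈ unitDisk := by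
    intro z hz
    simpa [unitDisk, he] using hz
  have he1 : e 1 = EuclideanSpace.single 0 1 := by
    have := Complex.orthonormalBasisOneI.repr_self 0
    simpa [he] using this
  have heI : e Complex.I = EuclideanSpace.single 1 1 := by
    have := Complex.orthonormalBasisOneI.repr_self 1
    simpa [he] using this
  have hcd : ∀ z ∈ ball (0 : ℂ) 1, ContDiffAt ℝ 2 f (e z) := fun z hz =>
    hC.contDiffAt (hopen.mem_nhds (hmem z hz))
  intro z hz
  refine ⟨(hcd z hz).comp z e.contDiff.contDiffAt, ?_⟩
  filter_upwards [isOpen_ball.mem_nhds hz] with w hw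
  have hd1 : DifferentiableAt ℝ (fderiv ℝ f) (e w) :=
    ((hcd w hw).fderiv_right (m := 1) (by norm_num)).differentiableAt (by norm_num)
  have hpd : ∀ i : Fin 2, ∀ v, fderiv ℝ (pd i f) (e w) v
      = fderiv ℝ (fderiv ℝ f) (e w) v (EuclideanSpace.single i 1) := by
    intro i v
    have : pd i f = fun y => fderiv ℝ f y (EuclideanSpace.single i 1) := rfl
    rw [this, fderiv_clm_apply hd1 (by fun_prop)]
    simp
  have hfun : (fun z : ℂ => f (Complex.orthonormalBasisOneI.repr z)) = f ∘ e := rfl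
  rw [hfun, laplacian_eq_iteratedFDeriv_complexPlane]
  have hcomp : ∀ m : Fin 2 → ℂ, iteratedFDeriv ℝ 2 (f ∘ e) w m
      = iteratedFDeriv ℝ 2 f (e w) (e ∘ m) := by
    intro m
    have h := ContinuousLinearEquiv.iteratedFDerivWithin_comp_right e f uniqueDiffOn_univ
      (x := w) (mem_univ _) 2
    simp only [preimage_univ, iteratedFDerivWithin_univ] at h
    rw [h]
    rfl
  simp only [hcomp, iteratedFDeriv_two_apply]
  have := hL (e w) (hmem w hw)
  rw [hpd, hpd] at this
  simpa [he1, heI] using this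

/-- The sharp Harnack gradient bound at the centre of the disk, for the real part of a
holomorphic function. It is the Schwarz lemma for the Cayley transform
`(F - F 0) / (F + conj (F 0))`. -/
lemma positive_harmonic_deriv_le {F : ℂ → ℂ} (hF : DifferentiableOn ℂ F (ball 0 1))
    (hpos : ∀ z ∈ ball (0 : ℂ) 1, 0 < (F z).re) : ‖deriv F 0‖ ≤ 2 * (F 0).re := by
  have h0 : (0 : ℂ) ∈ ball (0 : ℂ) 1 := by simp
  set c := F 0 with hc
  have hcpos : 0 < c.re := hpos 0 h0
  have hne : ∀ z ∈ ball (0 : ℂ) 1, F z + (starRingEnd ℂ) c ≠ 0 := by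
    intro z hz h
    have := congrArg Complex.re h
    simp at this
    linarith [hpos z hz]
  have hlt : ∀ z ∈ ball (0 : ℂ) 1, ‖(F z - c) / (F z + (starRingEnd ℂ) c)‖ < 1 := by
    intro z hz
    rw [norm_div, div_lt_one (norm_pos_iff.mpr (hne z hz))]
    rw [← sq_lt_sq₀ (norm_nonneg _) (norm_nonneg _), ← Complex.normSq_eq_norm_sq,
      ← Complex.normSq_eq_norm_sq, Complex.normSq_apply, Complex.normSq_apply]
    simp
    nlinarith [mul_pos (hpos z hz) hcpos]
  have hdiff : DifferentiableOn ℂ (fun z => (F z - c) / (F z + (starRingEnd ℂ) c)) (ball 0 1) :=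
    (hF.sub_const c).div (hF.add_const _) hne
  have hS := Complex.norm_deriv_le_one_of_mapsTo_ball (c := 0) (R := 1) hdiff
    (by
      intro z hz
      have := hlt z hz
      simpa [← hc] using this.le) one_pos
  have hFd : HasDerivAt F (deriv F 0) 0 :=
    (hF.differentiableAt (isOpen_ball.mem_nhds h0)).hasDerivAt
  have hder := (hFd.sub_const c).div (hFd.add_const ((starRingEnd ℂ) c)) (hne 0 h0)
  have hder' : deriv (fun z => (F z - c) / (F z + (starRingEnd ℂ) c)) 0
      = deriv F 0 / (c + (starRingEnd ℂ) c) := by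
    have hn := hne 0 h0
    refine hder.deriv.trans ?_
    rw [← hc] at hn ⊢
    field_simp
    ring
  rw [hder', norm_div, Complex.add_conj] at hS
  have hn : ‖((2 * c.re : ℝ) : ℂ)‖ = 2 * c.re := by
    rw [Complex.norm_real, Real.norm_of_nonneg (by linarith)]
  rw [hn, div_le_one (by linarith)] at hS
  exact hS

open InnerProductSpace in
/-- The harmonic function `c - l ∘ f` is the real part of a holomorphic function. -/
lemma harmonic_re {d : ℕ} {f : Euc 2 → Euc d} (hf : ConformalHarmonicOnDisk f)
    (l : Euc d →L[ℝ] ℝ) (c : ℝ) : ∃ F : ℂ → ℂ, DifferentiableOn ℂ F (ball 0 1) ∧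
      ∀ z ∈ ball (0 : ℂ) 1, (F z).re = c - l (f (Complex.orthonormalBasisOneI.repr z)) := by
  have h1 := (harmonicOnNhd_comp_repr hf).comp_CLM l
  have h2 := (harmonicOnNhd_const (s := ball (0 : ℂ) 1) c).sub h1
  obtain ⟨F, hF, hre⟩ := h2.exists_analyticOnNhd_ball_re_eq
  exact ⟨F, hF.differentiableOn, fun z hz => hre hz⟩

/-- A conformal harmonic disk contained in the half-space `{l < c}` has `l`-derivative at its
centre at most twice the `l`-distance of the centre to the bounding hyperplane. All lower bounds
for the minimal metric come from this estimate. -/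
lemma abs_apply_pd_le {d : ℕ} {f : Euc 2 → Euc d} (hf : ConformalHarmonicOnDisk f)
    (l : Euc d →L[ℝ] ℝ) (c : ℝ) (hpos : ∀ z ∈ unitDisk, l (f z) < c) :
    |l (pd 0 f 0)| ≤ 2 * (c - l (f 0)) := by
  obtain ⟨F, hF, hre⟩ := harmonic_re hf l c
  have h0 : (0 : ℂ) ∈ ball (0 : ℂ) 1 := by simp
  have hP : ∀ z ∈ ball (0 : ℂ) 1, 0 < (F z).re := by
    intro z hz
    rw [hre z hz]
    have : Complex.orthonormalBasisOneI.repr z ∈ unitDisk := by simpa [unitDisk] using hz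
    linarith [hpos _ this]
  have hb := positive_harmonic_deriv_le hF hP
  rw [hre 0 h0, map_zero] at hb
  refine le_trans ?_ hb
  have hFd : HasDerivAt F (deriv F 0) 0 :=
    (hF.differentiableAt (isOpen_ball.mem_nhds h0)).hasDerivAt
  have hA : HasDerivAt (fun t : ℝ => (F t).re) (deriv F 0).re 0 := by
    have := HasDerivAt.real_of_complex (z := 0) (e := F) (e' := deriv F 0) (by simpa using hFd)
    simpa using this
  have hfd : HasFDerivAt f (fderiv ℝ f 0) 0 := by
    have h0' : (0 : Euc 2) ∈ unitDisk := by simp [unitDisk]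
    exact ((hf.1.contDiffAt (isOpen_ball.mem_nhds h0')).differentiableAt (by norm_num)).hasFDerivAt
  have hB : HasDerivAt (fun t : ℝ => c - l (f (t • EuclideanSpace.single 0 1)))
      (-l (pd 0 f 0)) 0 := by
    have hline : HasDerivAt (fun t : ℝ => t • (EuclideanSpace.single 0 1 : Euc 2))
        (EuclideanSpace.single 0 1) 0 := by
      simpa using (hasDerivAt_id (0 : ℝ)).smul_const (EuclideanSpace.single 0 1 : Euc 2)
    have h1 : HasDerivAt (fun t : ℝ => f (t • EuclideanSpace.single 0 1)) (pd 0 f 0) 0 := by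
      have hfd' : HasFDerivAt f (fderiv ℝ f 0) ((0 : ℝ) • (EuclideanSpace.single 0 1 : Euc 2)) := by
        simpa using hfd
      exact hfd'.comp_hasDerivAt 0 hline
    exact (l.hasFDerivAt.comp_hasDerivAt 0 h1).const_sub c
  have heq : (fun t : ℝ => c - l (f (t • EuclideanSpace.single 0 1)))
      =ᶠ[nhds 0] fun t : ℝ => (F t).re := by
    filter_upwards [isOpen_ball.mem_nhds (mem_ball_self (x := (0 : ℝ)) one_pos)] with t ht
    have : (t : ℂ) ∈ ball (0 : ℂ) 1 := by simpa using ht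
    rw [hre _ this]
    have h1 : Complex.orthonormalBasisOneI.repr (t : ℂ) = t • EuclideanSpace.single 0 1 := by
      have := Complex.orthonormalBasisOneI.repr_self 0
      rw [← this, ← map_smul]
      simp
    rw [h1]
  have : (deriv F 0).re = -l (pd 0 f 0) := (hA.congr_of_eventuallyEq heq).unique hB
  rw [← abs_neg, ← this]
  exact Complex.abs_re_le_norm _

/-- Maximum principle for `l ∘ f`, via the maximum modulus principle for `exp (-F)`. -/
lemma apply_eq_of_max {d : ℕ} {f : Euc 2 → Euc d} (hf : ConformalHarmonicOnDisk f)
    (l : Euc d →L[ℝ] ℝ) (hle : ∀ z ∈ unitDisk, l (f z) ≤ l (f 0)) :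
    ∀ z ∈ unitDisk, l (f z) = l (f 0) := by
  obtain ⟨F, hF, hre⟩ := harmonic_re hf l (l (f 0))
  have h0 : (0 : ℂ) ∈ ball (0 : ℂ) 1 := by simp
  have hmem : ∀ z ∈ ball (0 : ℂ) 1, Complex.orthonormalBasisOneI.repr z ∈ unitDisk := by
    intro z hz; simpa [unitDisk] using hz
  have hE : DifferentiableOn ℂ (fun z => Complex.exp (-F z)) (ball 0 1) := hF.neg.cexp
  have hmax : IsMaxOn (norm ∘ fun z => Complex.exp (-F z)) (ball 0 1) 0 := by
    intro z hz
    simp only [mem_ofPred_eq, Function.comp_apply, Complex.norm_exp, Complex.neg_re,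
      Real.exp_le_exp, hre z hz, hre 0 h0, map_zero]
    linarith [hle _ (hmem z hz)]
  have hcon := Complex.eqOn_of_isPreconnected_of_isMaxOn_norm
    (convex_ball (0 : ℂ) 1).isPreconnected isOpen_ball hE h0 hmax
  intro w hw
  have hz : Complex.orthonormalBasisOneI.repr.symm w ∈ ball (0 : ℂ) 1 := by
    rw [mem_ball_zero_iff, LinearIsometryEquiv.norm_map]
    simpa [unitDisk] using hw
  have h2 := congrArg norm (hcon hz)
  simp only [Function.const_apply, Complex.norm_exp, Complex.neg_re, Real.exp_eq_exp, hre _ hz,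
    hre 0 h0, map_zero, LinearIsometryEquiv.apply_symm_apply] at h2
  linarith

/-! ### Bounds for the minimal metric -/

lemma pd_planar {d : ℕ} (z v w : Euc d) (ζ : Euc 2) :
    pd 0 (fun ζ : Euc 2 => z + (ζ 0 • v + ζ 1 • w)) ζ = v ∧
    pd 1 (fun ζ : Euc 2 => z + (ζ 0 • v + ζ 1 • w)) ζ = w := by
  have h : HasFDerivAt (fun ζ : Euc 2 => z + (ζ 0 • v + ζ 1 • w))
      ((EuclideanSpace.proj 0 : Euc 2 →L[ℝ] ℝ).smulRight v
        + (EuclideanSpace.proj 1 : Euc 2 →L[ℝ] ℝ).smulRight w) ζ := by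
    exact ((((EuclideanSpace.proj 0 : Euc 2 →L[ℝ] ℝ).smulRight v
        + (EuclideanSpace.proj 1 : Euc 2 →L[ℝ] ℝ).smulRight w).hasFDerivAt
          (x := ζ)).const_add z)
  unfold pd
  rw [h.fderiv]
  constructor <;> simp

lemma conformalHarmonic_planar {d : ℕ} (z v w : Euc d) (hn : ‖v‖ = ‖w‖) (ho : ⟪v, w⟫ = 0) :
    ConformalHarmonicOnDisk (fun ζ : Euc 2 => z + (ζ 0 • v + ζ 1 • w)) := by
  refine ⟨?_, ?_, ?_⟩
  · apply ContDiff.contDiffOn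
    fun_prop
  · intro ζ _
    have h0 : pd 0 (fun ζ : Euc 2 => z + (ζ 0 • v + ζ 1 • w)) = fun _ => v :=
      funext fun ζ => (pd_planar z v w ζ).1
    have h1 : pd 1 (fun ζ : Euc 2 => z + (ζ 0 • v + ζ 1 • w)) = fun _ => w :=
      funext fun ζ => (pd_planar z v w ζ).2
    rw [h0, h1]
    simp
  · intro ζ _
    rw [(pd_planar z v w ζ).1, (pd_planar z v w ζ).2]
    exact ⟨hn, ho⟩

lemma minMetric_bddBelow {d : ℕ} (D : Set (Euc d)) (x v : Euc d) :
    BddBelow {c : ℝ | ∃ r : ℝ, 0 < r ∧ c = 1 / r ∧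
    ∃ f : Euc 2 → Euc d, ConformalHarmonicOnDisk f ∧ (∀ z ∈ unitDisk, f z ∈ D) ∧
      f 0 = x ∧ pd 0 f 0 = r • v} := by
  refine ⟨0, ?_⟩
  rintro c ⟨r, hr, rfl, -⟩
  positivity

lemma minMetric_nonneg {d : ℕ} (D : Set (Euc d)) (x v : Euc d) : 0 ≤ minMetric D x v := by
  apply Real.sInf_nonneg
  rintro c ⟨r, hr, rfl, -⟩
  positivity

/-- A flat round disk in `D` centred at `x` bounds the minimal metric from above. -/
lemma minMetric_le_of_disk {d : ℕ} {D : Set (Euc d)} {x v w : Euc d} {r : ℝ} (hr : 0 < r)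
    (hn : ‖v‖ = ‖w‖) (ho : ⟪v, w⟫ = 0)
    (hD : ∀ ζ ∈ unitDisk, x + r • (ζ 0 • v + ζ 1 • w) ∈ D) : minMetric D x v ≤ 1 / r := by
  refine csInf_le (minMetric_bddBelow D x v) ⟨r, hr, rfl,
    fun ζ => x + (ζ 0 • (r • v) + ζ 1 • (r • w)), ?_, ?_, ?_, ?_⟩
  · apply conformalHarmonic_planar
    · rw [norm_smul, norm_smul, hn]
    · rw [inner_smul_left, inner_smul_right, ho]; simp
  · intro ζ hζ
    have := hD ζ hζ
    rwa [smul_add, smul_comm r, smul_comm r] at this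
  · simp
  · exact (pd_planar _ _ _ _).1

lemma exists_perp {d : ℕ} (hd : 3 ≤ d) (v : Euc d) : ∃ w : Euc d, ‖v‖ = ‖w‖ ∧ ⟪v, w⟫ = 0 := by
  have hlt : Module.finrank ℝ (ℝ ∙ v) < Module.finrank ℝ (Euc d) := by
    have := finrank_span_le_card (R := ℝ) ({v} : Set (Euc d))
    rw [toFinset_singleton, Finset.card_singleton] at this
    rw [finrank_euclideanSpace_fin]; omega
  have hne : (ℝ ∙ v)ᗮ ≠ ⊥ := by
    intro h
    rw [Submodule.orthogonal_eq_bot_iff] at h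
    rw [h, finrank_top] at hlt
    exact lt_irrefl _ hlt
  obtain ⟨w, hw, hw0⟩ := Submodule.exists_mem_ne_zero_of_ne_bot hne
  refine ⟨(‖v‖ / ‖w‖) • w, ?_, ?_⟩
  · rw [norm_smul, Real.norm_of_nonneg (by positivity)]
    field_simp [norm_ne_zero_iff.mpr hw0]
  · rw [inner_smul_right, Submodule.mem_orthogonal_singleton_iff_inner_right.mp hw, mul_zero]

lemma disk_sum_norm_le {d : ℕ} {v w : Euc d} (hn : ‖v‖ = ‖w‖) (ho : ⟪v, w⟫ = 0)
    {ζ : Euc 2} (hζ : ζ ∈ unitDisk) : ‖ζ 0 • v + ζ 1 • w‖ ≤ ‖v‖ := by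
  have h1 : ‖ζ 0 • v + ζ 1 • w‖ ^ 2 = (ζ 0 ^ 2 + ζ 1 ^ 2) * ‖v‖ ^ 2 := by
    rw [norm_add_sq_real, norm_smul, norm_smul, inner_smul_left, inner_smul_right, ho, ← hn]
    simp [mul_pow]
    ring
  have h2 : ζ 0 ^ 2 + ζ 1 ^ 2 ≤ 1 := by
    have h3 : ‖ζ‖ < 1 := by simpa [unitDisk] using hζ
    have h4 : ‖ζ‖ ^ 2 = ζ 0 ^ 2 + ζ 1 ^ 2 := by
      rw [EuclideanSpace.norm_sq_eq]; simp
    nlinarith [norm_nonneg ζ]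
  refine le_of_sq_le_sq ?_ (norm_nonneg _)
  rw [h1]
  nlinarith [sq_nonneg ‖v‖]

lemma minMetric_le_of_ball {d : ℕ} (hd : 3 ≤ d) {D : Set (Euc d)} {x v : Euc d} {R r : ℝ}
    (hr : 0 < r) (hrv : r * ‖v‖ < R) (hD : ball x R ⊆ D) : minMetric D x v ≤ 1 / r := by
  obtain ⟨w, hn, ho⟩ := exists_perp hd v
  refine minMetric_le_of_disk hr hn ho fun ζ hζ => hD ?_
  rw [mem_ball, dist_self_add_left, norm_smul, Real.norm_of_nonneg hr.le]
  exact lt_of_le_of_lt (mul_le_mul_of_nonneg_left (disk_sum_norm_le hn ho hζ) hr.le) hrv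

/-- A half-space `{l < c}` containing `D` bounds the minimal metric from below. The dimension
hypothesis makes the infimum defining the metric run over a nonempty set. -/
lemma le_minMetric {d : ℕ} (hd : 3 ≤ d) {D : Set (Euc d)} (hOpen : IsOpen D)
    (l : Euc d →L[ℝ] ℝ) (c : ℝ) (hl : ∀ x ∈ D, l x < c) {x : Euc d} (hx : x ∈ D) (v : Euc d) :
    |l v| / (2 * (c - l x)) ≤ minMetric D x v := by
  obtain ⟨R, hR, hball⟩ := Metric.isOpen_iff.mp hOpen x hx
  apply le_csInf
  · obtain ⟨w, hn, ho⟩ := exists_perp hd v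
    have hr : 0 < R / (‖v‖ + 1) := by positivity
    refine ⟨_, R / (‖v‖ + 1), hr, rfl,
      fun ζ => x + (ζ 0 • ((R / (‖v‖ + 1)) • v) + ζ 1 • ((R / (‖v‖ + 1)) • w)), ?_, ?_, ?_, ?_⟩
    · apply conformalHarmonic_planar
      · rw [norm_smul, norm_smul, hn]
      · rw [inner_smul_left, inner_smul_right, ho]; simp
    · intro ζ hζ
      apply hball
      beta_reduce
      rw [smul_comm (ζ 0), smul_comm (ζ 1), ← smul_add, mem_ball, dist_self_add_left, norm_smul,
        Real.norm_of_nonneg hr.le]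
      refine lt_of_le_of_lt (mul_le_mul_of_nonneg_left (disk_sum_norm_le hn ho hζ) hr.le) ?_
      rw [div_mul_eq_mul_div, div_lt_iff₀ (by positivity)]
      nlinarith [norm_nonneg v]
    · simp
    · exact (pd_planar _ _ _ _).1
  · rintro _ ⟨r, hr, rfl, f, hf, hfD, rfl, hpd⟩
    have h := abs_apply_pd_le hf l c fun z hz => hl _ (hfD z hz)
    rw [hpd, map_smul, smul_eq_mul, abs_mul, abs_of_pos hr] at h
    have hc : 0 < c - l (f 0) := by linarith [hl _ hx]
    rw [div_le_div_iff₀ (by positivity) hr]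
    linarith

lemma minMetric_smul {d : ℕ} (D : Set (Euc d)) (x v : Euc d) {c : ℝ} (hc : 0 < c) :
    minMetric D x (c • v) = c * minMetric D x v := by
  unfold minMetric
  rw [← smul_eq_mul, ← Real.sInf_smul_of_nonneg hc.le]
  congr 1
  ext y
  simp only [mem_smul_set, mem_ofPred_eq, smul_eq_mul]
  constructor
  · rintro ⟨r, hr, rfl, f, h1, h2, h3, h4⟩
    refine ⟨1 / (r * c), ⟨r * c, by positivity, rfl, f, h1, h2, h3, ?_⟩, ?_⟩
    · rw [h4, smul_smul]
    · field_simp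
  · rintro ⟨_, ⟨r, hr, rfl, f, h1, h2, h3, h4⟩, rfl⟩
    refine ⟨r / c, by positivity, by field_simp, f, h1, h2, h3, ?_⟩
    rw [h4, smul_smul]
    congr 1
    field_simp

lemma fderiv_comp_neg_euc {d : ℕ} (f : Euc 2 → Euc d) (z : Euc 2) :
    fderiv ℝ (fun z => f (-z)) z = -fderiv ℝ f (-z) := by
  simpa using fderiv_comp_smul (f := f) (x := z) (-1 : ℝ)

lemma conformalHarmonic_comp_neg {d : ℕ} {f : Euc 2 → Euc d} (hf : ConformalHarmonicOnDisk f) :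
    ConformalHarmonicOnDisk (fun z => f (-z)) ∧ ∀ i z, pd i (fun z => f (-z)) z = -pd i f (-z) := by
  have hpd : ∀ i, pd i (fun z => f (-z)) = fun z => -pd i f (-z) := by
    intro i
    funext z
    simp only [pd]
    rw [fderiv_comp_neg_euc]
    simp
  have hmem : ∀ z ∈ unitDisk, -z ∈ unitDisk := by
    intro z hz
    simpa [unitDisk] using hz
  refine ⟨⟨?_, ?_, ?_⟩, fun i z => by rw [hpd]⟩
  · exact hf.1.comp contDiff_neg.contDiffOn hmem
  · intro z hz
    rw [hpd, hpd]
    have h2 : ∀ i, fderiv ℝ (fun z => -pd i f (-z)) z = fderiv ℝ (pd i f) (-z) := by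
      intro i
      rw [fderiv_fun_neg, fderiv_comp_neg_euc, neg_neg]
    rw [h2, h2]
    exact hf.2.1 _ (hmem z hz)
  · intro z hz
    rw [hpd, hpd]
    simpa using hf.2.2 _ (hmem z hz)

lemma minMetric_neg {d : ℕ} (D : Set (Euc d)) (x v : Euc d) :
    minMetric D x (-v) = minMetric D x v := by
  have key : ∀ v : Euc d, {c : ℝ | ∃ r : ℝ, 0 < r ∧ c = 1 / r ∧
    ∃ f : Euc 2 → Euc d, ConformalHarmonicOnDisk f ∧ (∀ z ∈ unitDisk, f z ∈ D) ∧
      f 0 = x ∧ pd 0 f 0 = r • v} ⊆ {c : ℝ | ∃ r : ℝ, 0 < r ∧ c = 1 / r ∧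
    ∃ f : Euc 2 → Euc d, ConformalHarmonicOnDisk f ∧ (∀ z ∈ unitDisk, f z ∈ D) ∧
      f 0 = x ∧ pd 0 f 0 = r • (-v)} := by
    rintro v c ⟨r, hr, rfl, f, h1, h2, h3, h4⟩
    refine ⟨r, hr, rfl, fun z => f (-z), (conformalHarmonic_comp_neg h1).1, ?_, by simpa using h3, ?_⟩
    · intro z hz
      exact h2 _ (by simpa [unitDisk] using hz)
    · rw [(conformalHarmonic_comp_neg h1).2, neg_zero, h4, smul_neg]
  unfold minMetric
  congr 1
  apply Subset.antisymm
  · simpa using key (-v)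
  · exact key v

/-! ### The minimal distance and near-geodesics -/

lemma minDist_le_of_curve {d : ℕ} {D : Set (Euc d)} {γ : ℝ → Euc d} (hγ : PiecewiseC1On γ 0 1)
    (hD : ∀ t ∈ Icc (0 : ℝ) 1, γ t ∈ D) :
    minDist D (γ 0) (γ 1) ≤ ∫ t in (0:ℝ)..(1:ℝ), minMetric D (γ t) (deriv γ t) := by
  refine csInf_le ⟨0, ?_⟩ ⟨γ, hγ, hD, rfl, rfl, rfl⟩
  rintro _ ⟨γ, -, -, -, -, rfl⟩
  exact intervalIntegral.integral_nonneg zero_le_one fun t _ => minMetric_nonneg _ _ _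

/-- A curve in `D` with distinct endpoints has integrable speed: otherwise its length would be
the junk value `0`, forcing the distance of its endpoints to vanish. -/
lemma intervalIntegrable_of_hyp {d : ℕ} {D : Set (Euc d)} (hHyp : MinHyperbolic D)
    {γ : ℝ → Euc d} (hγ : PiecewiseC1On γ 0 1)
    (hD : ∀ t ∈ Icc (0 : ℝ) 1, γ t ∈ D) (hne : γ 0 ≠ γ 1) :
    IntervalIntegrable (fun t => minMetric D (γ t) (deriv γ t)) MeasureTheory.volume 0 1 := by
  by_contra h
  have h1 := minDist_le_of_curve hγ hD
  rw [intervalIntegral.integral_undef h] at h1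
  exact absurd (hHyp _ (hD 0 (by simp)) _ (hD 1 (by simp)) hne) (not_lt.mpr h1)

/-- Restriction to `[a, b]`, reparametrized by `[0, 1]`; the break points are the old ones
transported and clamped to `[0, 1]`. -/
lemma PiecewiseC1On.comp_affine {d : ℕ} {γ : ℝ → Euc d} (hγ : PiecewiseC1On γ 0 1) {a b : ℝ}
    (ha : 0 ≤ a) (hab : a < b) (hb : b ≤ 1) :
    PiecewiseC1On (fun τ => γ ((b - a) * τ + a)) 0 1 := by
  obtain ⟨hc, n, t, ht, h0, h1, hC⟩ := hγ
  have hba : 0 < b - a := sub_pos.mpr hab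
  refine ⟨?_, n, fun i => max 0 (min 1 ((t i - a) / (b - a))), ?_, ?_, ?_, ?_⟩
  · refine hc.comp (by fun_prop) ?_
    intro τ hτ
    constructor <;> nlinarith [hτ.1, hτ.2]
  · intro i j hij
    have := ht hij
    dsimp only
    gcongr
  · have : (t 0 - a) / (b - a) ≤ 0 := by
      apply div_nonpos_of_nonpos_of_nonneg _ hba.le
      rw [h0]; linarith
    exact max_eq_left (le_trans (min_le_right _ _) this)
  · have : 1 ≤ (t (Fin.last (n + 1)) - a) / (b - a) := by
      rw [le_div_iff₀ hba, h1]; linarith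
    simp only [min_eq_left this]
    simp
  · intro i
    beta_reduce
    set p := (t i.castSucc - a) / (b - a) with hp
    set q := (t i.succ - a) / (b - a) with hq
    rcases eq_or_ne (max 0 (min 1 p)) (max 0 (min 1 q)) with heq | hne
    · rw [heq, Icc_self]
      intro x hx
      rw [mem_singleton_iff] at hx
      subst hx
      exact contDiffWithinAt_singleton
    · have hpq : p ≤ q := by
        have := ht (Fin.castSucc_le_succ i)
        rw [hp, hq]; gcongr
      have hp1 : p < 1 := by
        by_contra h
        push Not at h
        exact hne (by rw [min_eq_left h, min_eq_left (h.trans hpq)])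
      have hq0 : 0 < q := by
        by_contra h
        push Not at h
        exact hne (by rw [max_eq_left ((min_le_right _ _).trans h),
          max_eq_left ((min_le_right _ _).trans (hpq.trans h))])
      refine (hC i).comp (g := γ) (f := fun τ => (b - a) * τ + a) (ContDiff.contDiffOn (by fun_prop)) ?_
      intro τ hτ
      have h3 : p ≤ τ := by
        refine le_trans ?_ hτ.1
        rw [min_eq_right hp1.le]
        exact le_max_right _ _
      have h4 : τ ≤ q := by
        refine hτ.2.trans ?_
        exact max_le hq0.le (min_le_right _ _)
      rw [hp, div_le_iff₀ hba] at h3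
      rw [hq, le_div_iff₀ hba] at h4
      constructor <;> linarith

lemma minDist_le_subcurve {d : ℕ} {D : Set (Euc d)} {γ : ℝ → Euc d} (hγ : PiecewiseC1On γ 0 1)
    (hD : ∀ t ∈ Icc (0 : ℝ) 1, γ t ∈ D) {a b : ℝ}
    (ha : 0 ≤ a) (hab : a < b) (hb : b ≤ 1) :
    minDist D (γ a) (γ b) ≤ ∫ t in a..b, minMetric D (γ t) (deriv γ t) := by
  have hba : 0 < b - a := sub_pos.mpr hab
  have h := minDist_le_of_curve (D := D) (hγ.comp_affine ha hab hb) (by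
    intro t ht
    apply hD
    constructor <;> nlinarith [ht.1, ht.2])
  have hder : ∀ τ, deriv (fun τ => γ ((b - a) * τ + a)) τ = (b - a) • deriv γ ((b - a) * τ + a) := by
    intro τ
    rw [deriv_comp_mul_left (b - a) (fun s => γ (s + a)) τ, deriv_comp_add_const]
  simp only [hder, minMetric_smul _ _ _ hba, intervalIntegral.integral_const_mul] at h
  rw [intervalIntegral.integral_comp_mul_add (fun s => minMetric D (γ s) (deriv γ s)) hba.ne' a,
    smul_eq_mul, ← mul_assoc, mul_inv_cancel₀ hba.ne', one_mul] at h
  simpa using h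

lemma PiecewiseC1On.reverse {d : ℕ} {γ : ℝ → Euc d} (hγ : PiecewiseC1On γ 0 1) :
    PiecewiseC1On (fun τ => γ (1 - τ)) 0 1 := by
  obtain ⟨hc, n, t, ht, h0, h1, hC⟩ := hγ
  refine ⟨?_, n, fun i => 1 - t i.rev, ?_, ?_, ?_, ?_⟩
  · refine hc.comp (by fun_prop) ?_
    intro τ hτ
    constructor <;> linarith [hτ.1, hτ.2]
  · intro i j hij
    have := ht (Fin.rev_le_rev.mpr hij)
    dsimp only
    linarith
  · simp [h1]
  · simp [h0]
  · intro i
    have h := hC i.rev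
    refine h.comp (g := γ) (f := fun τ => 1 - τ) (ContDiff.contDiffOn (by fun_prop)) ?_
    intro τ hτ
    rw [← Fin.rev_succ, ← Fin.rev_castSucc]
    constructor <;> linarith [hτ.1, hτ.2]

lemma minDist_comm {d : ℕ} (D : Set (Euc d)) (x y : Euc d) : minDist D x y = minDist D y x := by
  have key : ∀ x y : Euc d, {L : ℝ | ∃ γ : ℝ → Euc d, PiecewiseC1On γ 0 1 ∧
    (∀ t ∈ Set.Icc (0:ℝ) 1, γ t ∈ D) ∧ γ 0 = x ∧ γ 1 = y ∧
    L = ∫ t in (0:ℝ)..(1:ℝ), minMetric D (γ t) (deriv γ t)} ⊆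
    {L : ℝ | ∃ γ : ℝ → Euc d, PiecewiseC1On γ 0 1 ∧
    (∀ t ∈ Set.Icc (0:ℝ) 1, γ t ∈ D) ∧ γ 0 = y ∧ γ 1 = x ∧
    L = ∫ t in (0:ℝ)..(1:ℝ), minMetric D (γ t) (deriv γ t)} := by
    rintro x y _ ⟨γ, h1, h2, h3, h4, rfl⟩
    refine ⟨fun τ => γ (1 - τ), h1.reverse, ?_, by simpa using h4, by simpa using h3, ?_⟩
    · intro t ht
      exact h2 _ ⟨by linarith [ht.2], by linarith [ht.1]⟩
    · simp only [deriv_comp_const_sub, minMetric_neg]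
      rw [intervalIntegral.integral_comp_sub_left (fun s => minMetric D (γ s) (deriv γ s))]
      simp
  exact congrArg sInf (Subset.antisymm (key x y) (key y x))

lemma ContDiff.piecewiseC1On {d : ℕ} {γ : ℝ → Euc d} (h : ContDiff ℝ 1 γ) :
    PiecewiseC1On γ 0 1 := by
  refine ⟨h.continuous.continuousOn, 0, ![0, 1], ?_, rfl, rfl, fun i => h.contDiffOn⟩
  intro i j hij
  fin_cases i <;> fin_cases j <;> simp at hij ⊢

/-- Only a pointwise bound of the speed is needed: no measurability of the minimal metric along
the segment enters. -/
lemma minDist_le_of_segment {d : ℕ} {D : Set (Euc d)} (hConv : Convex ℝ D) {x y : Euc d}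
    (hx : x ∈ D) (hy : y ∈ D) {C : ℝ}
    (h : ∀ t ∈ Icc (0 : ℝ) 1, minMetric D (x + t • (y - x)) (y - x) ≤ C) :
    minDist D x y ≤ C := by
  have h1 := minDist_le_of_curve (D := D) (γ := fun t => x + t • (y - x))
    (ContDiff.piecewiseC1On (by fun_prop))
    (fun t ht => hConv.add_smul_sub_mem hx hy ht)
  have hder : ∀ t, deriv (fun t : ℝ => x + t • (y - x)) t = y - x := by
    intro t
    have : HasDerivAt (fun t : ℝ => x + t • (y - x)) ((1 : ℝ) • (y - x)) t :=
      ((hasDerivAt_id t).smul_const (y - x)).const_add x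
    rw [this.deriv, one_smul]
  simp only [hder] at h1
  have h2 : x + (1 : ℝ) • (y - x) = y := by simp
  rw [h2, zero_smul, add_zero] at h1
  refine h1.trans (le_trans (le_abs_self _) ?_)
  have h3 := intervalIntegral.norm_integral_le_of_norm_le_const (a := 0) (b := 1) (C := C)
    (f := fun t => minMetric D (x + t • (y - x)) (y - x)) (by
      intro t ht
      rw [uIoc_of_le zero_le_one] at ht
      rw [Real.norm_of_nonneg (minMetric_nonneg _ _ _)]
      exact h t ⟨ht.1.le, ht.2⟩)
  simpa using h3

/-- Integrated form of `le_minMetric`, along the smooth pieces of a curve. -/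
lemma log_sub_log_le_integral {d : ℕ} (hd : 3 ≤ d) {D : Set (Euc d)} (hOpen : IsOpen D)
    (l : Euc d →L[ℝ] ℝ) (c : ℝ) (hl : ∀ x ∈ D, l x < c) {γ : ℝ → Euc d}
    (hγ : PiecewiseC1On γ 0 1) (hD : ∀ t ∈ Icc (0 : ℝ) 1, γ t ∈ D)
    (hInt : IntervalIntegrable (fun t => minMetric D (γ t) (deriv γ t)) MeasureTheory.volume 0 1) :
    Real.log (c - l (γ 1)) / 2 - Real.log (c - l (γ 0)) / 2
      ≤ ∫ t in (0:ℝ)..(1:ℝ), minMetric D (γ t) (deriv γ t) := by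
  obtain ⟨hc, n, t, ht, h0, h1, hC⟩ := hγ
  have hmem : ∀ i, t i ∈ Icc (0 : ℝ) 1 := fun i =>
    ⟨h0 ▸ ht (Fin.zero_le i), h1 ▸ ht (Fin.le_last i)⟩
  have hIntI : ∀ a ∈ Icc (0 : ℝ) 1, ∀ b ∈ Icc (0 : ℝ) 1, IntervalIntegrable
      (fun t => minMetric D (γ t) (deriv γ t)) MeasureTheory.volume a b := by
    intro a ha b hb
    apply hInt.mono_set
    rw [uIcc_of_le zero_le_one]
    exact uIcc_subset_Icc ha hb
  have hcont : ContinuousOn (fun s => Real.log (c - l (γ s)) / 2) (Icc 0 1) := by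
    refine ContinuousOn.div_const (ContinuousOn.log ?_ ?_) 2
    · exact continuousOn_const.sub (l.continuous.comp_continuousOn hc)
    · intro s hs
      have := hl _ (hD s hs)
      linarith
  have key : ∀ j : Fin (n + 2), Real.log (c - l (γ (t j))) / 2 - Real.log (c - l (γ 0)) / 2
      ≤ ∫ s in (0:ℝ)..(t j), minMetric D (γ s) (deriv γ s) := by
    intro j
    induction j using Fin.induction with
    | zero => simp [h0]
    | succ i ih =>
      have hle : t i.castSucc ≤ t i.succ := ht (Fin.castSucc_le_succ i)
      have hsub : Icc (t i.castSucc) (t i.succ) ⊆ Icc 0 1 :=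
        Icc_subset_Icc (hmem _).1 (hmem _).2
      have hstep := intervalIntegral.sub_le_integral_of_hasDeriv_right_of_le (a := t i.castSucc)
        (b := t i.succ) (g := fun s => Real.log (c - l (γ s)) / 2)
        (g' := fun s => (-l (deriv γ s)) / (c - l (γ s)) / 2)
        (φ := fun s => minMetric D (γ s) (deriv γ s)) hle (hcont.mono hsub) (by
          intro s hs
          have hd1 : HasDerivAt γ (deriv γ s) s :=
            (((hC i).contDiffAt (Icc_mem_nhds hs.1 hs.2)).differentiableAt
              one_ne_zero).hasDerivAt
          have hpos := hl _ (hD s (hsub (Ioo_subset_Icc_self hs)))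
          exact ((((l.hasFDerivAt.comp_hasDerivAt s hd1).const_sub c).log
            (by simp; linarith)).div_const 2).hasDerivWithinAt)
          ((intervalIntegrable_iff_integrableOn_Icc_of_le hle).mp (hIntI _ (hmem _) _ (hmem _))) (by
          intro s hs
          have hm := hD s (hsub (Ioo_subset_Icc_self hs))
          have hpos : 0 < c - l (γ s) := by linarith [hl _ hm]
          refine le_trans ?_ (le_minMetric hd hOpen l c hl hm (deriv γ s))
          rw [div_div, mul_comm]
          gcongr
          exact neg_le_abs _)
      have hadd := intervalIntegral.integral_add_adjacent_intervals
        (hIntI 0 (by simp) (t i.castSucc) (hmem _)) (hIntI (t i.castSucc) (hmem _) (t i.succ) (hmem _))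
      linarith
  have := key (Fin.last (n + 1))
  rwa [h1] at this

lemma log_sub_log_le_minDist {d : ℕ} (hd : 3 ≤ d) {D : Set (Euc d)} (hOpen : IsOpen D)
    (hConv : Convex ℝ D) (hHyp : MinHyperbolic D)
    (l : Euc d →L[ℝ] ℝ) (c : ℝ) (hl : ∀ x ∈ D, l x < c) {x y : Euc d}
    (hx : x ∈ D) (hy : y ∈ D) :
    Real.log (c - l y) / 2 - Real.log (c - l x) / 2 ≤ minDist D x y := by
  apply le_csInf
  · exact ⟨_, fun t => x + t • (y - x), ContDiff.piecewiseC1On (by fun_prop),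
      fun t ht => hConv.add_smul_sub_mem hx hy ht, by simp, by simp, rfl⟩
  · rintro _ ⟨γ, h1, h2, rfl, rfl, rfl⟩
    rcases eq_or_ne (γ 0) (γ 1) with h | h
    · rw [h, sub_self]
      exact intervalIntegral.integral_nonneg zero_le_one fun t _ => minMetric_nonneg _ _ _
    · exact log_sub_log_le_integral hd hOpen l c hl h1 h2 (intervalIntegrable_of_hyp hHyp h1 h2 h)

/-- Half the logarithm of the distance to a hyperplane bounding `D` is `1`-Lipschitz for the
minimal distance. -/
lemma abs_log_sub_log_le_minDist {d : ℕ} (hd : 3 ≤ d) {D : Set (Euc d)} (hOpen : IsOpen D)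
    (hConv : Convex ℝ D) (hHyp : MinHyperbolic D)
    (l : Euc d →L[ℝ] ℝ) (c : ℝ) (hl : ∀ x ∈ D, l x < c) {x y : Euc d}
    (hx : x ∈ D) (hy : y ∈ D) :
    |Real.log (c - l x) / 2 - Real.log (c - l y) / 2| ≤ minDist D x y := by
  rw [abs_le']
  constructor
  · rw [minDist_comm]
    exact log_sub_log_le_minDist hd hOpen hConv hHyp l c hl hy hx
  · rw [neg_sub]
    exact log_sub_log_le_minDist hd hOpen hConv hHyp l c hl hx hy

/-- On an almost length-minimizing curve from `p` to `q` there is a point with a prescribed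
intermediate value of `φ`; every point `o` of such a curve has small Gromov product `(p|q)_o`. -/
lemma exists_near_geodesic_point {d : ℕ} {D : Set (Euc d)}
    (hConv : Convex ℝ D) (hHyp : MinHyperbolic D) {p q : Euc d} (hp : p ∈ D) (hq : q ∈ D)
    (φ : Euc d → ℝ) (hφ : ContinuousOn φ D) {y : ℝ} (h1 : φ q < y) (h2 : y < φ p) :
    ∃ o ∈ D, φ o = y ∧ gromovProd D o p q ≤ 1 / 2 := by
  have hne : p ≠ q := by
    rintro rfl
    exact lt_irrefl _ (h1.trans h2)
  have hnon : {L : ℝ | ∃ γ : ℝ → Euc d, PiecewiseC1On γ 0 1 ∧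
    (∀ t ∈ Set.Icc (0:ℝ) 1, γ t ∈ D) ∧ γ 0 = p ∧ γ 1 = q ∧
    L = ∫ t in (0:ℝ)..(1:ℝ), minMetric D (γ t) (deriv γ t)}.Nonempty :=
    ⟨_, fun t => p + t • (q - p), ContDiff.piecewiseC1On (by fun_prop),
      fun t ht => hConv.add_smul_sub_mem hp hq ht, by simp, by simp, rfl⟩
  obtain ⟨_, ⟨γ, hγ, hD, rfl, rfl, rfl⟩, hlt⟩ :=
    exists_lt_of_csInf_lt hnon (lt_add_one (minDist D p q))
  have hInt := intervalIntegrable_of_hyp hHyp hγ hD hne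
  have hcont : ContinuousOn (fun t => φ (γ t)) (Icc 0 1) := hφ.comp hγ.1 hD
  obtain ⟨t, ht, hty⟩ := intermediate_value_Ioo' zero_le_one hcont ⟨h1, h2⟩
  have htI : t ∈ Icc (0 : ℝ) 1 := Ioo_subset_Icc_self ht
  refine ⟨γ t, hD t htI, hty, ?_⟩
  have hA := minDist_le_subcurve hγ hD le_rfl ht.1 ht.2.le
  have hB := minDist_le_subcurve hγ hD ht.1.le ht.2 le_rfl
  have hadd := intervalIntegral.integral_add_adjacent_intervals
    (hInt.mono_set (a := 0) (b := 1) (c := 0) (d := t) (by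
      rw [uIcc_of_le zero_le_one]; exact uIcc_subset_Icc (by simp) htI))
    (hInt.mono_set (c := t) (d := 1) (by
      rw [uIcc_of_le zero_le_one]; exact uIcc_subset_Icc htI (by simp)))
  unfold gromovProd
  rw [minDist_comm D (γ 1) (γ t)]
  linarith

/-! ### Gromov products along chains, and the cone over a segment of the boundary -/

lemma gromovProd_comm {d : ℕ} (D : Set (Euc d)) (o x y : Euc d) :
    gromovProd D o x y = gromovProd D o y x := by
  unfold gromovProd
  rw [minDist_comm D x y]
  ring

/-- Bisection: along a chain of `2 ^ n` steps of length at most `K` that stays at distance at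
least `M` from `o`, the Gromov product of the endpoints loses only `n * δ`, logarithmically in the
number of steps. -/
lemma gromovProd_chain {d : ℕ} {D : Set (Euc d)} {δ K M : ℝ}
    (hG : ∀ x ∈ D, ∀ y ∈ D, ∀ z ∈ D, ∀ o ∈ D,
      min (gromovProd D o x z) (gromovProd D o y z) - δ ≤ gromovProd D o x y)
    {o : Euc d} (ho : o ∈ D) (n : ℕ) (x : ℕ → Euc d) (hx : ∀ i ≤ 2 ^ n, x i ∈ D)
    (hstep : ∀ i < 2 ^ n, minDist D (x i) (x (i + 1)) ≤ K)
    (hM : ∀ i ≤ 2 ^ n, M ≤ minDist D (x i) o) :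
    M - K / 2 - n * δ ≤ gromovProd D o (x 0) (x (2 ^ n)) := by
  induction n generalizing x with
  | zero =>
    have h0 := hM 0 (by simp)
    have h1 := hM 1 (by simp)
    have h2 := hstep 0 (by simp)
    simp only [zero_add] at h2
    simp only [pow_zero, gromovProd, Nat.cast_zero]
    linarith
  | succ n ih =>
    have hpow : 2 ^ (n + 1) = 2 ^ n + 2 ^ n := by ring
    have hle : 2 ^ n ≤ 2 ^ (n + 1) := by rw [hpow]; exact Nat.le_add_right _ _
    have h1 := ih x (fun i hi => hx i (by omega)) (fun i hi => hstep i (by omega))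
      (fun i hi => hM i (by omega))
    have h2 := ih (fun i => x (2 ^ n + i)) (fun i hi => hx _ (by omega))
      (fun i hi => by simpa [add_assoc] using hstep (2 ^ n + i) (by omega))
      (fun i hi => hM _ (by omega))
    have h3 := hG (x 0) (hx _ (Nat.zero_le _)) (x (2 ^ (n + 1))) (hx _ le_rfl) (x (2 ^ n))
      (hx _ hle) o ho
    simp only [add_zero, ← hpow] at h2
    rw [gromovProd_comm] at h2
    have h4 := le_min h1 h2
    push_cast
    linarith

/-- If `(A 0 | B (2 ^ k))_o` is small, then any chain from `A 0` to `B (2 ^ k)` made of two legs of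
`2 ^ k` short steps passes within `M` of `o`, where `M` grows only linearly in `k`. -/
lemma exists_near_point {d : ℕ} {D : Set (Euc d)} {δ K M : ℝ}
    (hG : ∀ x ∈ D, ∀ y ∈ D, ∀ z ∈ D, ∀ o ∈ D,
      min (gromovProd D o x z) (gromovProd D o y z) - δ ≤ gromovProd D o x y)
    {o : Euc d} (ho : o ∈ D) (k : ℕ) (A B : ℕ → Euc d) (hA : ∀ i ≤ 2 ^ k, A i ∈ D)
    (hB : ∀ i ≤ 2 ^ k, B i ∈ D) (hAB : A (2 ^ k) = B 0)
    (hAs : ∀ i < 2 ^ k, minDist D (A i) (A (i + 1)) ≤ K)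
    (hBs : ∀ i < 2 ^ k, minDist D (B i) (B (i + 1)) ≤ K)
    (hM : K / 2 + (k + 1) * δ + 1 ≤ M)
    (hprod : gromovProd D o (A 0) (B (2 ^ k)) ≤ 1 / 2) :
    (∃ i ≤ 2 ^ k, minDist D (A i) o < M) ∨ ∃ i ≤ 2 ^ k, minDist D (B i) o < M := by
  by_contra! h
  have h1 := gromovProd_chain hG ho k A hA hAs h.1
  have h2 := gromovProd_chain hG ho k B hB hBs h.2
  have h3 := hG (A 0) (hA _ (by simp)) (B (2 ^ k)) (hB _ le_rfl) (A (2 ^ k)) (hA _ le_rfl) o ho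
  rw [← hAB, gromovProd_comm] at h2
  have h4 := le_min h1 h2
  linarith

/-- The point at height `s` on the segment from the boundary point `ξ + a • v` (at `s = 0`) to the
interior point `o` (at `s = 1`). -/
def conePt {d : ℕ} (ξ v o : Euc d) (a s : ℝ) : Euc d := (1 - s) • (ξ + a • v) + s • o

lemma combo_mem {d : ℕ} {D : Set (Euc d)} (hOpen : IsOpen D) (hConv : Convex ℝ D)
    {u o : Euc d} (hu : u ∈ closure D) (ho : o ∈ D) {s : ℝ} (hs : 0 < s) (hs1 : s ≤ 1) :
    (1 - s) • u + s • o ∈ D := by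
  have h := hConv.combo_interior_closure_mem_interior (x := o) (y := u) (a := s) (b := 1 - s)
    (by rwa [hOpen.interior_eq]) hu hs (by linarith) (by ring)
  rwa [hOpen.interior_eq, add_comm] at h

lemma conePt_base_mem {d : ℕ} {D : Set (Euc d)} (hConv : Convex ℝ D)
    {ξ v : Euc d} (hξ : ξ ∈ closure D) (hu : ξ + v ∈ closure D) {a : ℝ} (ha : 0 ≤ a)
    (ha1 : a ≤ 1) : ξ + a • v ∈ closure D := by
  have := hConv.closure.add_smul_sub_mem hξ hu (t := a) ⟨ha, ha1⟩
  simpa using this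

/-- Halving the height `s` costs a bounded amount: the cone over a ball around `o` contains balls
of radius proportional to `s`. -/
lemma minDist_vertical_le {d : ℕ} (hd : 3 ≤ d) {D : Set (Euc d)} (hOpen : IsOpen D)
    (hConv : Convex ℝ D) {ξ v o : Euc d} (hξ : ξ ∈ closure D) (hu : ξ + v ∈ closure D)
    {R : ℝ} (hR : 0 < R) (ho : ball o R ⊆ D) {a s : ℝ} (ha : 0 ≤ a) (ha1 : a ≤ 1)
    (hs : 0 < s) (hs1 : s ≤ 1) :
    minDist D (conePt ξ v o a s) (conePt ξ v o a (s / 2)) ≤ (‖ξ‖ + ‖v‖ + ‖o‖ + 1) / R := by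
  have hoD : o ∈ D := ho (mem_ball_self hR)
  have hU := conePt_base_mem hConv hξ hu ha ha1
  set U := ξ + a • v with hUdef
  have hUn : ‖U - o‖ < ‖ξ‖ + ‖v‖ + ‖o‖ + 1 := by
    have h1 : ‖U - o‖ ≤ ‖U‖ + ‖o‖ := norm_sub_le _ _
    have h2 : ‖U‖ ≤ ‖ξ‖ + ‖a • v‖ := norm_add_le _ _
    rw [norm_smul, Real.norm_of_nonneg ha] at h2
    nlinarith [norm_nonneg v]
  set B := ‖ξ‖ + ‖v‖ + ‖o‖ + 1 with hB
  have hB0 : 0 < B := by positivity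
  have hA : conePt ξ v o a s ∈ D := combo_mem hOpen hConv hU hoD hs hs1
  have hA' : conePt ξ v o a (s / 2) ∈ D :=
    combo_mem hOpen hConv hU hoD (by linarith) (by linarith)
  refine minDist_le_of_segment hConv hA hA' ?_
  intro t ht
  have hdiff : conePt ξ v o a (s / 2) - conePt ξ v o a s = (s / 2) • (U - o) := by
    simp only [conePt, ← hUdef]
    module
  rw [hdiff]
  have hpt : conePt ξ v o a s + t • (s / 2) • (U - o)
      = (1 - (s - t * s / 2)) • U + (s - t * s / 2) • o := by
    simp only [conePt, ← hUdef]
    module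
  rw [hpt]
  set σ := s - t * s / 2 with hσ
  have hσ1 : s / 2 ≤ σ := by nlinarith [ht.2]
  have hσ2 : σ ≤ 1 := by nlinarith [ht.1]
  have hσ0 : 0 < σ := by linarith
  rw [← one_div_div R B]
  refine minMetric_le_of_ball hd (R := σ * R) (by positivity) ?_ ?_
  · rw [norm_smul, Real.norm_of_nonneg (by positivity)]
    have : R / B * (s / 2 * ‖U - o‖) < R / B * (s / 2 * B) := by gcongr
    refine this.trans_le ?_
    have : R / B * (s / 2 * B) = s / 2 * R := by field_simp
    rw [this]
    gcongr
  · intro y hy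
    have hy' : o + σ⁻¹ • (y - ((1 - σ) • U + σ • o)) ∈ ball o R := by
      rw [mem_ball, dist_self_add_left, norm_smul, Real.norm_of_nonneg (by positivity)]
      rw [mem_ball, dist_eq_norm] at hy
      rw [inv_mul_lt_iff₀ hσ0]
      exact hy
    have := combo_mem hOpen hConv hU (ho hy') hσ0 hσ2
    convert this using 1
    have hcancel : ∀ z : Euc d, σ • (o + σ⁻¹ • z) = σ • o + z := by
      intro z
      rw [smul_add, smul_smul, mul_inv_cancel₀ hσ0.ne', one_smul]
    rw [hcancel]
    module

/-- Halving `a` costs a bounded amount, uniformly in the height `s`: by convexity, the flat disk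
around `ξ + v`, shrunk towards `ξ`, gives disks in `closure D` of radius proportional to `a`. -/
lemma minDist_horizontal_le {d : ℕ} {D : Set (Euc d)} (hOpen : IsOpen D)
    (hConv : Convex ℝ D) {ξ v w o : Euc d} (hn : ‖v‖ = ‖w‖) (hvw : ⟪v, w⟫ = 0)
    (hξ : ξ ∈ closure D) {r : ℝ} (hr : 0 < r)
    (hdisk : ∀ ζ ∈ unitDisk, ξ + v + r • (ζ 0 • v + ζ 1 • w) ∈ closure D)
    (hoD : o ∈ D) {a s : ℝ} (ha : 0 < a) (ha1 : a ≤ 1)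
    (hs : 0 < s) (hs1 : s ≤ 1) :
    minDist D (conePt ξ v o a s) (conePt ξ v o (a / 2) s) ≤ 1 / r := by
  have hu : ξ + v ∈ closure D := by
    simpa using hdisk 0 (by simp [unitDisk])
  have hA : conePt ξ v o a s ∈ D :=
    combo_mem hOpen hConv (conePt_base_mem hConv hξ hu ha.le ha1) hoD hs hs1
  have hA' : conePt ξ v o (a / 2) s ∈ D :=
    combo_mem hOpen hConv (conePt_base_mem hConv hξ hu (by linarith) (by linarith)) hoD hs hs1
  refine minDist_le_of_segment hConv hA hA' ?_
  intro t ht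
  set κ := -((1 - s) * (a / 2)) with hκ
  have hdiff : conePt ξ v o (a / 2) s - conePt ξ v o a s = κ • v := by
    simp only [conePt, hκ]
    module
  rw [hdiff]
  refine minMetric_le_of_disk (w := κ • w) hr ?_ ?_ ?_
  · rw [norm_smul, norm_smul, hn]
  · rw [inner_smul_left, inner_smul_right, hvw]; simp
  · intro ζ hζ
    set b := a - t * a / 2 with hb
    have hb1 : a / 2 ≤ b := by nlinarith [ht.2]
    have hb2 : b ≤ 1 := by nlinarith [ht.1]
    have hb0 : 0 < b := by linarith
    have hq0 : 0 ≤ a / 2 / b := by positivity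
    have hq1 : a / 2 / b ≤ 1 := by rwa [div_le_one hb0]
    have hζ' : -(a / 2 / b) • ζ ∈ unitDisk := by
      rw [unitDisk, mem_ball_zero_iff] at hζ ⊢
      rw [norm_smul, norm_neg, Real.norm_of_nonneg hq0]
      nlinarith [norm_nonneg ζ]
    have h1 := hConv.closure.add_smul_sub_mem hξ (hdisk _ hζ') (t := b) ⟨hb0.le, hb2⟩
    have h2 := combo_mem hOpen hConv h1 hoD hs hs1
    convert h2 using 1
    simp only [conePt, PiLp.smul_apply, smul_eq_mul]
    have e1 : b * (r * (-(a / 2 / b) * ζ 0)) = -(r * (a / 2) * ζ 0) := by field_simp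
    have e2 : b * (r * (-(a / 2 / b) * ζ 1)) = -(r * (a / 2) * ζ 1) := by field_simp
    have e3 : b • (ξ + v + r • ((-(a / 2 / b) * ζ 0) • v + (-(a / 2 / b) * ζ 1) • w) - ξ)
        = b • v + (-(r * (a / 2) * ζ 0)) • v + (-(r * (a / 2) * ζ 1)) • w := by
      rw [← e1, ← e2]
      module
    rw [e3, hb, hκ]
    module

/-! ### Large flat squares contradict Gromov hyperbolicity -/

lemma exists_two_pow_gt {a b : ℝ} (ha : 0 ≤ a) (hb : 0 ≤ b) :
    ∃ k : ℕ, a + b * (k + 1) ≤ (2 : ℝ) ^ k := by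
  obtain ⟨m, hm⟩ := exists_nat_ge (a + 2 * b)
  -- `2 ^ (2 * m) ≥ (m + 1) ^ 2` beats a linear function
  refine ⟨2 * m, ?_⟩
  have h : ((m : ℝ) + 1) ≤ 2 ^ m := by exact_mod_cast (Nat.lt_two_pow_self : m < 2 ^ m)
  have h2 : ((m : ℝ) + 1) * (m + 1) ≤ 2 ^ (2 * m) := by
    rw [two_mul, pow_add]
    gcongr
  have hm0 : (0 : ℝ) ≤ m := Nat.cast_nonneg m
  push_cast
  nlinarith

/-- A flat disk around `ξ + v` in the face `{l = c}` of `closure D`, such that the ray from its centre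
through `ξ` leaves `closure D` at `ξ`, contradicts Gromov hyperbolicity. In the coordinates
`(log a, log s)` the points `conePt ξ v o a s` contain arbitrarily large squares with steps of
bounded length. For a near-geodesic joining two opposite corners, its point `z` at the middle
height must be logarithmically close to both vertical sides, since it is far from the horizontal
ones; but the vertical sides are far apart, by the lower bound from a hyperplane that nearly
supports `D` at `ξ` transversally to `v`. -/
lemma not_gromov_of_flat_corner {d : ℕ} (hd : 3 ≤ d) {D : Set (Euc d)} (hOpen : IsOpen D)
    (hConv : Convex ℝ D) (hne : D.Nonempty) (hHyp : MinHyperbolic D) {δ : ℝ} (hδ : 0 ≤ δ)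
    (hG : ∀ x ∈ D, ∀ y ∈ D, ∀ z ∈ D, ∀ o ∈ D,
      min (gromovProd D o x z) (gromovProd D o y z) - δ ≤ gromovProd D o x y)
    {ξ v w : Euc d} (hn : ‖v‖ = ‖w‖) (hvw : ⟪v, w⟫ = 0) (hξ : ξ ∈ closure D)
    {r : ℝ} (hr : 0 < r)
    (hdisk : ∀ ζ ∈ unitDisk, ξ + v + r • (ζ 0 • v + ζ 1 • w) ∈ closure D)
    (l : Euc d →L[ℝ] ℝ) (c : ℝ) (hl : ∀ x ∈ D, l x < c) (hlξ : l ξ = c) (hlv : l v = 0)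
    (hexit : ∀ ε : ℝ, 0 < ε → ξ - ε • v ∉ closure D) : False := by
  have hu : ξ + v ∈ closure D := by simpa using hdisk 0 (by simp [unitDisk])
  obtain ⟨o, hoD⟩ := hne
  obtain ⟨R, hR, hoR⟩ := Metric.isOpen_iff.mp hOpen o hoD
  set K := max ((‖ξ‖ + ‖v‖ + ‖o‖ + 1) / R) (1 / r) with hK
  have hK0 : 0 < K := lt_max_of_lt_right (by positivity)
  -- the square has side `N = 2 ^ k`, chosen to beat the logarithmic loss `M`
  obtain ⟨k, hk⟩ := exists_two_pow_gt (a := 4 * K + 16) (b := 8 * δ) (by positivity)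
    (by positivity)
  set N := 2 ^ k with hN
  set M := K / 2 + (k + 1) * δ + 1 with hM
  have hNr : (N : ℝ) = 2 ^ k := by simp [hN]
  have hMN : 4 * K + 16 + 8 * δ * (k + 1) ≤ N := by rw [hNr]; exact hk
  have hδk : 0 ≤ (k + 1) * δ := by positivity
  set α : ℝ := (1 / 2) ^ N with hα
  have hα0 : 0 < α := by positivity
  -- a hyperplane separating `closure D` from `ξ - α • v`: its distance to `ξ + a • v` is comparable
  -- to `a * β` for `a ∈ [α, 1]`
  obtain ⟨l', c', hl', hc'⟩ := geometric_hahn_banach_closed_point hConv.closure isClosed_closure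
    (hexit α hα0)
  simp only [map_sub, map_smul, smul_eq_mul] at hc'
  set β := - l' v with hβ
  have hψξ := hl' ξ hξ
  have hψo := hl' o (subset_closure hoD)
  have hβ0 : 0 < β := by
    by_contra hcon
    nlinarith
  -- heights at most `T` are too small to disturb this comparison
  obtain ⟨T, hT0, hT2, hTo⟩ : ∃ T : ℝ, 0 < T ∧ T ≤ 1 / 2 ∧ T * (c' - l' o) ≤ α * β := by
    have hp : 0 < c' - l' o := by linarith
    refine ⟨min (1 / 2) (α * β / (c' - l' o)), by positivity, min_le_left _ _, ?_⟩
    rw [← le_div_iff₀ hp]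
    exact min_le_right _ _
  have hpw : ∀ i : ℕ, (0 : ℝ) < (1 / 2) ^ i ∧ ((1 : ℝ) / 2) ^ i ≤ 1 := fun i =>
    ⟨by positivity, pow_le_one₀ (by norm_num) (by norm_num)⟩
  have hTp : ∀ i : ℕ, 0 < T * (1 / 2) ^ i ∧ T * (1 / 2) ^ i ≤ T := fun i =>
    ⟨mul_pos hT0 (hpw i).1, mul_le_of_le_one_right hT0.le (hpw i).2⟩
  set P := conePt ξ v o with hP
  have hmem : ∀ a s : ℝ, 0 ≤ a → a ≤ 1 → 0 < s → s ≤ 1 → P a s ∈ D := fun a s h1 h2 h3 h4 =>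
    combo_mem hOpen hConv (conePt_base_mem hConv hξ hu h1 h2) hoD h3 h4
  have hvert : ∀ a s : ℝ, 0 ≤ a → a ≤ 1 → 0 < s → s ≤ 1 →
      minDist D (P a s) (P a (s / 2)) ≤ K := fun a s h1 h2 h3 h4 =>
    (minDist_vertical_le hd hOpen hConv hξ hu hR hoR h1 h2 h3 h4).trans (le_max_left _ _)
  have hhor : ∀ a s : ℝ, 0 < a → a ≤ 1 → 0 < s → s ≤ 1 →
      minDist D (P a s) (P (a / 2) s) ≤ K := fun a s h1 h2 h3 h4 =>
    (minDist_horizontal_le hOpen hConv hn hvw hξ hr hdisk hoD h1 h2 h3 h4).trans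
      (le_max_right _ _)
  have hlP : ∀ a s, c - l (P a s) = s * (c - l o) := by
    intro a s
    simp only [hP, conePt, map_add, map_smul, smul_eq_mul, hlξ, hlv]
    ring
  have hlP' : ∀ a s, c' - l' (P a s) = (1 - s) * (c' - l' ξ + a * β) + s * (c' - l' o) := by
    intro a s
    simp only [hP, conePt, map_add, map_smul, smul_eq_mul, hβ]
    ring
  have hco : 0 < c - l o := sub_pos.mpr (hl o hoD)
  set φ : Euc d → ℝ := fun x => Real.log (c - l x) / 2 with hφ
  have hφc : ContinuousOn φ D := by
    refine ContinuousOn.div_const (ContinuousOn.log (by fun_prop) ?_) _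
    intro x hx
    exact (sub_pos.mpr (hl x hx)).ne'
  set y₀ := Real.log (T * (c - l o)) / 2 with hy₀
  have hφP : ∀ a, φ (P a T) = y₀ := by
    intro a
    simp only [hφ, hlP, hy₀]
  have hφQ : ∀ a, φ (P a (T * α)) = y₀ - N * Real.log 2 / 2 := by
    intro a
    simp only [hφ, hlP, hy₀]
    rw [show T * α * (c - l o) = (T * (c - l o)) * α by ring,
      Real.log_mul (by positivity) hα0.ne', hα, Real.log_pow, one_div, Real.log_inv]
    ring
  have hlog2 := Real.log_two_gt_d9
  have hlog2' := Real.log_two_lt_d9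
  have hNpos : (0 : ℝ) < N * Real.log 2 := by
    have : (0 : ℝ) < N := by rw [hNr]; positivity
    positivity
  have hNlog : 0.69 * (N : ℝ) ≤ N * Real.log 2 := by
    have : (0 : ℝ) < N := by rw [hNr]; positivity
    nlinarith
  have hT1 : T ≤ 1 := by linarith
  have hα1 : α ≤ 1 := (hpw N).2
  have hp : P 1 T ∈ D := hmem _ _ (by norm_num) le_rfl hT0 hT1
  have hq : P α (T * α) ∈ D := hmem _ _ hα0.le hα1 (hTp N).1 ((hTp N).2.trans hT1)
  obtain ⟨z, hz, hφz, hprod⟩ := exists_near_geodesic_point hConv hHyp hp hq φ hφc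
    (y := y₀ - N * Real.log 2 / 4) (by rw [hφQ]; linarith) (by rw [hφP]; linarith)
  have hfar : ∀ x ∈ D, (φ x = y₀ ∨ φ x = y₀ - N * Real.log 2 / 2) → M ≤ minDist D x z := by
    intro x hx hor
    have h := abs_log_sub_log_le_minDist hd hOpen hConv hHyp l c hl hx hz
    change |φ x - φ z| ≤ _ at h
    refine le_trans ?_ h
    rcases hor with h1 | h1 <;> rw [h1, hφz]
    · exact le_trans (by linarith) (le_abs_self _)
    · exact le_trans (by linarith) (neg_le_abs _)
  have hhalf : ∀ i : ℕ, ((1 : ℝ) / 2) ^ (i + 1) = (1 / 2) ^ i / 2 := fun i => by ring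
  -- first path: down along `a = 1`, then across at the bottom level
  obtain ⟨i, -, hi⟩ : ∃ i ≤ N, minDist D (P 1 (T * (1 / 2) ^ i)) z < M := by
    rcases exists_near_point hG hz k (fun i => P 1 (T * (1 / 2) ^ i))
      (fun i => P ((1 / 2) ^ i) (T * α))
      (fun i _ => hmem _ _ (by norm_num) le_rfl (hTp i).1 ((hTp i).2.trans hT1))
      (fun i _ => hmem _ _ (hpw i).1.le (hpw i).2 (hTp N).1 ((hTp N).2.trans hT1))
      (by simp [hα, hN])
      (fun i _ => by
        rw [hhalf, ← mul_div_assoc]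
        exact hvert _ _ (by norm_num) le_rfl (hTp i).1 ((hTp i).2.trans hT1))
      (fun i _ => by
        rw [hhalf]
        exact hhor _ _ (hpw i).1 (hpw i).2 (hTp N).1 ((hTp N).2.trans hT1))
      hM.ge (by simpa [hα, hN] using hprod) with h | ⟨i, -, hi⟩
    · exact h
    · exact absurd hi (not_lt.mpr (hfar _
        (hmem _ _ (hpw i).1.le (hpw i).2 (hTp N).1 ((hTp N).2.trans hT1)) (Or.inr (hφQ _))))
  -- second path: across at the top level, then down along `a = α`
  obtain ⟨j, -, hj⟩ : ∃ j ≤ N, minDist D (P α (T * (1 / 2) ^ j)) z < M := by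
    rcases exists_near_point hG hz k (fun i => P ((1 / 2) ^ i) T)
      (fun i => P α (T * (1 / 2) ^ i))
      (fun i _ => hmem _ _ (hpw i).1.le (hpw i).2 hT0 hT1)
      (fun i _ => hmem _ _ hα0.le hα1 (hTp i).1 ((hTp i).2.trans hT1))
      (by simp [hα, hN])
      (fun i _ => by
        rw [hhalf]
        exact hhor _ _ (hpw i).1 (hpw i).2 hT0 hT1)
      (fun i _ => by
        rw [hhalf, ← mul_div_assoc]
        exact hvert _ _ hα0.le hα1 (hTp i).1 ((hTp i).2.trans hT1))
      hM.ge (by simpa [hα, hN] using hprod) with ⟨i, -, hi⟩ | h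
    · exact absurd hi (not_lt.mpr (hfar _ (hmem _ _ (hpw i).1.le (hpw i).2 hT0 hT1)
        (Or.inl (hφP _))))
    · exact h
  have hlD : ∀ x ∈ D, l' x < c' := fun x hx => hl' x (subset_closure hx)
  have hx1 := abs_log_sub_log_le_minDist hd hOpen hConv hHyp l' c' hlD
    (hmem 1 _ (by norm_num) le_rfl (hTp i).1 ((hTp i).2.trans hT1)) hz
  have hx2 := abs_log_sub_log_le_minDist hd hOpen hConv hHyp l' c' hlD
    (hmem α _ hα0.le hα1 (hTp j).1 ((hTp j).2.trans hT1)) hz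
  have hs1 := hTp i
  have hs2 := hTp j
  have hψo' : 0 < c' - l' o := by linarith
  -- the two sides are separated by `l'`, contradicting that both come within `M` of `z`
  have hb1 : β / 2 ≤ c' - l' (P 1 (T * (1 / 2) ^ i)) := by
    rw [hlP']
    have h1 : 0 ≤ T * (1 / 2) ^ i * (c' - l' o) := by
      have := hs1.1
      positivity
    have h2 : 1 / 2 * β ≤ (1 - T * (1 / 2) ^ i) * (c' - l' ξ + 1 * β) := by
      apply mul_le_mul <;> linarith
    linarith
  have hb2 : c' - l' (P α (T * (1 / 2) ^ j)) ≤ 3 * α * β := by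
    rw [hlP']
    have h1 : T * (1 / 2) ^ j * (c' - l' o) ≤ T * (c' - l' o) := by
      have := hs2.2
      gcongr
    have h2 : (1 - T * (1 / 2) ^ j) * (c' - l' ξ + α * β) ≤ 1 * (c' - l' ξ + α * β) := by
      have : 0 < α * β := by positivity
      apply mul_le_mul_of_nonneg_right <;> linarith
    have h3 : α * β = - (α * l' v) := by rw [hβ]; ring
    linarith
  have hb2p : 0 < c' - l' (P α (T * (1 / 2) ^ j)) :=
    sub_pos.mpr (hlD _ (hmem α _ hα0.le hα1 (hTp j).1 ((hTp j).2.trans hT1)))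
  have hL1 := Real.log_le_log (by positivity) hb1
  have hL2 := Real.log_le_log hb2p hb2
  rw [Real.log_div hβ0.ne' (by norm_num)] at hL1
  rw [Real.log_mul (by positivity) hβ0.ne', Real.log_mul (by norm_num) hα0.ne', hα,
    Real.log_pow, one_div, Real.log_inv] at hL2
  have hlog3 : Real.log 3 ≤ 3 - 1 := Real.log_le_sub_one_of_pos (by norm_num)
  have e1 := (le_abs_self _).trans hx1
  have e2 := (neg_le_abs _).trans hx2
  norm_num at hL2 e1 e2 hi hj hL1
  linarith

/-! ### Flat disks in faces of the domain -/

/-- A hyperbolic convex domain contains no affine 2-plane in its closure: a translate of such a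
plane through an interior point would lie in `D`, and its arbitrarily large round disks would make
the minimal distance vanish along it. -/
lemma exists_plane_exit {d : ℕ} {D : Set (Euc d)} (hOpen : IsOpen D)
    (hConv : Convex ℝ D) (hne : D.Nonempty) (hHyp : MinHyperbolic D)
    {u a b : Euc d} (hn : ‖a‖ = ‖b‖) (hab : ⟪a, b⟫ = 0) (ha : a ≠ 0) :
    ∃ x y : ℝ, u + (x • a + y • b) ∉ closure D := by
  by_contra! hall
  obtain ⟨o, hoD⟩ := hne
  obtain ⟨R, hR, hoR⟩ := Metric.isOpen_iff.mp hOpen o hoD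
  -- pushing `o` slightly away from `u` stays in `D`
  obtain ⟨τ, hτ0, hτ⟩ : ∃ τ : ℝ, 0 < τ ∧ o + τ • (o - u) ∈ D := by
    refine ⟨R / (‖o - u‖ + 1), by positivity, hoR ?_⟩
    rw [mem_ball, dist_self_add_left, norm_smul, Real.norm_of_nonneg (by positivity),
      div_mul_eq_mul_div, div_lt_iff₀ (by positivity)]
    nlinarith [norm_nonneg (o - u)]
  -- `o + (x • a + y • b)` is a convex combination of that point and a point of the plane
  have hplane : ∀ x y : ℝ, o + (x • a + y • b) ∈ D := by
    intro x y
    have h := combo_mem hOpen hConv (hall ((1 + τ) / τ * x) ((1 + τ) / τ * y)) hτ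
      (s := 1 / (1 + τ)) (by positivity) (by rw [div_le_one (by positivity)]; linarith)
    convert h using 1
    have e1 : (1 - 1 / (1 + τ)) * ((1 + τ) / τ * x) = x := by field_simp; ring
    have e2 : (1 - 1 / (1 + τ)) * ((1 + τ) / τ * y) = y := by field_simp; ring
    have e3 : 1 / (1 + τ) * τ = 1 - 1 / (1 + τ) := by field_simp; ring
    simp only [smul_add, smul_smul, e1, e2, e3]
    module
  have hle : ∀ r : ℝ, 0 < r → minDist D o (o + a) ≤ 1 / r := by
    intro r hr
    refine minDist_le_of_segment hConv hoD (by simpa using hplane 1 0) fun t ht => ?_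
    rw [add_sub_cancel_left]
    refine minMetric_le_of_disk hr hn hab fun ζ hζ => ?_
    convert hplane (t + r * ζ 0) (r * ζ 1) using 1
    module
  have hpos := hHyp o hoD (o + a) (by simpa using hplane 1 0) (by simpa using ha)
  have h := hle (2 / minDist D o (o + a)) (by positivity)
  rw [one_div_div] at h
  linarith

lemma pd_mem_span {d : ℕ} {f : Euc 2 → Euc d} (hf : ConformalHarmonicOnDisk f) {p e : Euc d}
    (hline : ∀ z ∈ unitDisk, ∃ t : ℝ, f z = p + t • e) (i : Fin 2) {z : Euc 2}
    (hz : z ∈ unitDisk) : pd i f z ∈ Submodule.span ℝ {e} := by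
  have hU : unitDisk ∈ nhds z := isOpen_ball.mem_nhds hz
  have hdf : DifferentiableAt ℝ f z := (hf.1.contDiffAt hU).differentiableAt (by norm_num)
  rw [← Submodule.orthogonal_orthogonal (Submodule.span ℝ {e}), Submodule.mem_orthogonal]
  intro y hy
  rw [Submodule.mem_orthogonal_singleton_iff_inner_right] at hy
  have h1 : (fun ζ => innerSL ℝ y (f ζ)) =ᶠ[nhds z] fun _ => ⟪y, p⟫ := by
    filter_upwards [hU] with ζ hζ
    obtain ⟨t, ht⟩ := hline ζ hζ
    rw [innerSL_apply_apply, ht, inner_add_right, inner_smul_right, real_inner_comm e, hy]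
    simp
  have h2 := ((innerSL ℝ y).hasFDerivAt.comp z hdf.hasFDerivAt).fderiv
  have h3 := h1.fderiv_eq (𝕜 := ℝ)
  rw [fderiv_fun_const] at h3
  have h4 : fderiv ℝ (fun ζ => innerSL ℝ y (f ζ)) z = (innerSL ℝ y).comp (fderiv ℝ f z) := h2
  rw [h3] at h4
  have h5 := congrArg (fun L => L (EuclideanSpace.single i 1)) h4
  simpa [pd] using h5.symm

/-- A conformal map into a line is constant: its partial derivatives are parallel, orthogonal and
of equal norm. -/
lemma const_of_mem_line {d : ℕ} {f : Euc 2 → Euc d} (hf : ConformalHarmonicOnDisk f) {p e : Euc d}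
    (hline : ∀ z ∈ unitDisk, ∃ t : ℝ, f z = p + t • e) :
    ∀ z ∈ unitDisk, ∀ w ∈ unitDisk, f z = f w := by
  have hpd : ∀ z ∈ unitDisk, pd 0 f z = 0 ∧ pd 1 f z = 0 := by
    intro z hz
    obtain ⟨s, hs⟩ := Submodule.mem_span_singleton.mp (pd_mem_span hf hline 0 hz)
    obtain ⟨t, ht⟩ := Submodule.mem_span_singleton.mp (pd_mem_span hf hline 1 hz)
    obtain ⟨h1, h2⟩ := hf.2.2 z hz
    have h3 : pd 0 f z = 0 ∨ pd 1 f z = 0 := by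
      rw [← hs, ← ht, inner_smul_left, inner_smul_right] at h2
      rw [← hs, ← ht]
      simp only [mul_eq_zero, inner_self_eq_zero, RCLike.conj_to_real] at h2
      rcases h2 with h | h | h <;> simp [h]
    rcases h3 with h | h
    · exact ⟨h, norm_eq_zero.mp (by rw [← h1, h, norm_zero])⟩
    · exact ⟨norm_eq_zero.mp (by rw [h1, h, norm_zero]), h⟩
  have hfd : EqOn (fderiv ℝ f) 0 unitDisk := by
    intro z hz
    ext1 y
    have hy : y = y 0 • EuclideanSpace.single 0 1 + y 1 • EuclideanSpace.single 1 1 := by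
      ext i
      fin_cases i <;> simp
    rw [hy, map_add, map_smul, map_smul]
    change y 0 • pd 0 f z + y 1 • pd 1 f z = _
    simp [hpd z hz]
  intro z hz w hw
  exact isOpen_ball.is_const_of_fderiv_eq_zero (convex_ball _ _).isPreconnected
    (hf.1.differentiableOn (by norm_num)) hfd hz hw

lemma abs_coord_le_one {ζ : Euc 2} (hζ : ζ ∈ unitDisk) (i : Fin 2) : |ζ i| ≤ 1 := by
  rw [unitDisk, mem_ball_zero_iff] at hζ
  exact (PiLp.norm_apply_le ζ i).trans hζ.le

/-- A triangle in a convex set contains a round disk in its plane. The disk is centred at the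
barycentre, its axes come from Gram–Schmidt, and `η` is small enough for all barycentric
coordinates to stay nonnegative. -/
lemma exists_flat_disk {d : ℕ} {S : Set (Euc d)} (hS : Convex ℝ S) {p e₁ e₂ : Euc d}
    (h0 : p ∈ S) (h1 : p + e₁ ∈ S) (h2 : p + e₂ ∈ S) (he₁ : e₁ ≠ 0)
    (he₂ : ∀ t : ℝ, e₂ ≠ t • e₁) :
    ∃ u a b : Euc d, ‖a‖ = ‖b‖ ∧ ⟪a, b⟫ = 0 ∧ a ≠ 0 ∧
      ∀ ζ ∈ unitDisk, u + (ζ 0 • a + ζ 1 • b) ∈ S := by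
  have hn1 : 0 < ‖e₁‖ := norm_pos_iff.mpr he₁
  set κ := ⟪e₁, e₂⟫ / ‖e₁‖ ^ 2 with hκ
  set b' := e₂ - κ • e₁ with hb'
  have hb0 : b' ≠ 0 := sub_ne_zero.mpr (he₂ κ)
  have hnb : 0 < ‖b'‖ := norm_pos_iff.mpr hb0
  have hperp : ⟪e₁, b'⟫ = 0 := by
    rw [hb', inner_sub_right, inner_smul_right, real_inner_self_eq_norm_sq, hκ]
    field_simp
    ring
  set m := ‖e₁‖ / ‖b'‖ with hm
  have hm0 : 0 < m := by positivity
  set η := 1 / (6 * (1 + m * |κ| + m)) with hη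
  have hη0 : 0 < η := by positivity
  have hη1 : η * (1 + m * |κ| + m) = 1 / 6 := by
    rw [hη]; field_simp
  refine ⟨p + (1 / 3 : ℝ) • e₁ + (1 / 3 : ℝ) • e₂, η • e₁, (η * m) • b', ?_, ?_, ?_, ?_⟩
  · rw [norm_smul, norm_smul, Real.norm_of_nonneg hη0.le, Real.norm_of_nonneg (by positivity), hm]
    field_simp
  · rw [inner_smul_left, inner_smul_right, hperp]; simp
  · exact smul_ne_zero hη0.ne' he₁
  · intro ζ hζ
    have c0 := abs_le.mp (abs_coord_le_one hζ 0)
    have c1 := abs_le.mp (abs_coord_le_one hζ 1)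
    set A := 1 / 3 + ζ 0 * η - ζ 1 * (η * m * κ) with hA
    set B := 1 / 3 + ζ 1 * (η * m) with hB
    have q0 : |ζ 0 * η| ≤ η := by
      rw [abs_mul, abs_of_pos hη0]
      exact mul_le_of_le_one_left hη0.le (abs_coord_le_one hζ 0)
    have q1 : |ζ 1 * (η * m * κ)| ≤ η * (m * |κ|) := by
      rw [abs_mul, abs_mul, abs_mul, abs_of_pos hη0, abs_of_pos hm0, mul_assoc η]
      exact mul_le_of_le_one_left (by positivity) (abs_coord_le_one hζ 1)
    have q2 : |ζ 1 * (η * m)| ≤ η * m := by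
      rw [abs_mul, abs_of_pos (mul_pos hη0 hm0)]
      exact mul_le_of_le_one_left (by positivity) (abs_coord_le_one hζ 1)
    rw [abs_le] at q0 q1 q2
    have hk0 : 0 ≤ η * (m * |κ|) := by positivity
    have hk1 : 0 ≤ η * m := by positivity
    have hA0 : 0 ≤ A := by rw [hA]; linarith [q0.1, q1.2]
    have hB0 : 0 ≤ B := by rw [hB]; linarith [q2.1]
    have hAB : A + B ≤ 1 := by rw [hA, hB]; linarith [q0.2, q1.1, q2.2]
    have key := hS.sum_mem (t := Finset.univ) (w := ![1 - A - B, A, B])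
      (z := ![p, p + e₁, p + e₂])
      (by intro i _; fin_cases i <;> simp <;> linarith)
      (by simp only [Fin.sum_univ_three, Matrix.cons_val]; ring)
      (by intro i _; fin_cases i <;> simp [h0, h1, h2])
    simp only [Fin.sum_univ_three, Matrix.cons_val] at key
    convert key using 1
    rw [hb', hA, hB]
    module

/-- If `D ⊆ ℝ^d` (`d ≥ 3`) is a hyperbolic convex domain such that
`(D, ρ_D)` is Gromov hyperbolic, then every conformal harmonic disk in `∂D` is constant. -/
theorem no_conformal_disk_in_boundary_of_gromov_hyperbolic
    (d : ℕ) (hd : 3 ≤ d) (D : Set (Euc d))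
    (hOpen : IsOpen D) (hConn : IsConnected D) (hConv : Convex ℝ D)
    (hHyp : MinHyperbolic D)
    (hGromov : ∃ δ : ℝ, 0 ≤ δ ∧ ∀ x ∈ D, ∀ y ∈ D, ∀ z ∈ D, ∀ o ∈ D,
      min (gromovProd D o x z) (gromovProd D o y z) - δ ≤ gromovProd D o x y)
    (f : Euc 2 → Euc d) (hf : ConformalHarmonicOnDisk f)
    (hfb : ∀ z ∈ unitDisk, f z ∈ frontier D) :
    ∀ z ∈ unitDisk, ∀ w ∈ unitDisk, f z = f w := by
  obtain ⟨δ, hδ, hG⟩ := hGromov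
  have hne := hConn.nonempty
  by_contra! hnc
  obtain ⟨z, hz, w, hw, hzw⟩ := hnc
  have h0 : (0 : Euc 2) ∈ unitDisk := by simp [unitDisk]
  have hcl : ∀ z ∈ unitDisk, f z ∈ closure D := fun z hz => frontier_subset_closure (hfb z hz)
  -- supporting hyperplane `l = c` at `f 0`
  have hf0 : f 0 ∉ D := fun h => by
    have := hfb 0 h0
    rw [hOpen.frontier_eq] at this
    exact this.2 h
  obtain ⟨l, hl⟩ := geometric_hahn_banach_open_point hConv hOpen hf0
  set c := l (f 0) with hc
  have hlcl : ∀ x ∈ closure D, l x ≤ c := fun x hx =>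
    closure_minimal (fun y hy => (hl y hy).le) (isClosed_le l.continuous continuous_const) hx
  have hlf := apply_eq_of_max hf l (fun z hz => hlcl _ (hcl z hz))
  -- a flat disk in the face `closure D ∩ {l = c}`
  obtain ⟨ζ₂, hζ₂, hnl⟩ : ∃ ζ ∈ unitDisk, ∀ t : ℝ, f ζ ≠ f z + t • (f w - f z) := by
    by_contra! hcon
    exact hzw (const_of_mem_line hf hcon z hz w hw)
  have hS : Convex ℝ (closure D ∩ {x | l x = c}) :=
    hConv.closure.inter (convex_hyperplane l.isLinear c)
  have hfS : ∀ z ∈ unitDisk, f z ∈ closure D ∩ {x | l x = c} := fun z hz => ⟨hcl z hz, hlf z hz⟩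
  obtain ⟨u, a, b, hn, hab, ha, hdisk⟩ := exists_flat_disk hS (hfS z hz)
    (e₁ := f w - f z) (e₂ := f ζ₂ - f z) (by simpa using hfS w hw) (by simpa using hfS ζ₂ hζ₂)
    (sub_ne_zero.mpr (Ne.symm hzw))
    (fun t ht => hnl t (by rw [← ht]; abel))
  have hpt : ∀ x y : ℝ, x ^ 2 + y ^ 2 < 1 →
      u + (x • a + y • b) ∈ closure D ∩ {x | l x = c} := by
    intro x y hxy
    have := hdisk !₂[x, y] (by
      rw [unitDisk, mem_ball_zero_iff, EuclideanSpace.norm_eq, Real.sqrt_lt' one_pos]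
      simpa [Fin.sum_univ_two] using hxy)
    simpa using this
  have hlu : l u = c := by simpa using (hpt 0 0 (by norm_num)).2
  have hla : l a = 0 := by
    have := (hpt (1 / 2) 0 (by norm_num)).2
    simp only [mem_ofPred_eq, map_add, map_smul, hlu, smul_eq_mul] at this
    linarith
  have hlb : l b = 0 := by
    have := (hpt 0 (1 / 2) (by norm_num)).2
    simp only [mem_ofPred_eq, map_add, map_smul, hlu, smul_eq_mul] at this
    linarith
  -- exit point of a ray in the plane of the disk
  obtain ⟨x, y, hxy⟩ := exists_plane_exit hOpen hConv hne hHyp (u := u) hn hab ha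
  set m := x • a + y • b with hm
  have hlm : l m = 0 := by simp [hm, hla, hlb]
  set q := 1 + x ^ 2 + y ^ 2 with hq
  have hq1 : 1 ≤ q := by rw [hq]; nlinarith [sq_nonneg x, sq_nonneg y]
  have huD : u ∈ closure D := by simpa using (hpt 0 0 (by norm_num)).1
  have hcomp : IsCompact (Icc (0 : ℝ) 1 ∩ {t | u + t • m ∈ closure D}) :=
    isCompact_Icc.inter_right (isClosed_closure.preimage (by fun_prop))
  obtain ⟨t, ⟨ht, htD⟩, htmax⟩ := hcomp.exists_isGreatest ⟨0, by simp, by simpa using huD⟩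
  have hq2 : (1 / q) ^ 2 * (x ^ 2 + y ^ 2) < 1 := by
    rw [div_pow, one_pow, div_mul_eq_mul_div, one_mul, div_lt_one (by positivity)]
    nlinarith
  have ht0 : 0 < t := by
    refine lt_of_lt_of_le (b := 1 / q) (by positivity) (htmax ⟨⟨by positivity, ?_⟩, ?_⟩)
    · rw [div_le_one (by linarith)]; exact hq1
    · have := (hpt (1 / q * x) (1 / q * y) (by nlinarith)).1
      change u + (1 / q) • m ∈ closure D
      convert this using 2
      rw [hm]
      module
  have ht1 : t < 1 := by
    refine lt_of_le_of_ne ht.2 ?_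
    rintro rfl
    exact hxy (by simpa using htD)
  have hnn : ⟪a, a⟫ = ⟪b, b⟫ := by
    rw [real_inner_self_eq_norm_sq, real_inner_self_eq_norm_sq, hn]
  have hba : ⟪b, a⟫ = 0 := by rw [real_inner_comm, hab]
  refine not_gromov_of_flat_corner hd hOpen hConv hne hHyp hδ hG (ξ := u + t • m)
    (v := -(t • m)) (w := -(t • (-y • a + x • b))) ?_ ?_ htD (r := 1 / q) (by positivity) ?_
    l c hl ?_ ?_ ?_
  · rw [norm_neg, norm_neg, norm_smul, norm_smul]
    congr 1
    rw [← sq_eq_sq₀ (norm_nonneg _) (norm_nonneg _), ← real_inner_self_eq_norm_sq,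
      ← real_inner_self_eq_norm_sq, hm]
    simp only [inner_add_left, inner_add_right, inner_smul_left, inner_smul_right,
      RCLike.conj_to_real, hab, hba, hnn]
    ring
  · rw [hm]
    simp only [inner_neg_left, inner_neg_right, inner_add_left, inner_add_right,
      inner_smul_left, inner_smul_right, RCLike.conj_to_real, hab, hba, hnn]
    ring
  · intro ζ hζ
    have hζ2 : ζ 0 ^ 2 + ζ 1 ^ 2 < 1 := by
      rw [unitDisk, mem_ball_zero_iff, EuclideanSpace.norm_eq, Real.sqrt_lt' one_pos] at hζ
      simpa [Fin.sum_univ_two] using hζ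
    have := (hpt (-(1 / q * t * (ζ 0 * x - ζ 1 * y))) (-(1 / q * t * (ζ 0 * y + ζ 1 * x))) (by
      have e : (-(1 / q * t * (ζ 0 * x - ζ 1 * y))) ^ 2
          + (-(1 / q * t * (ζ 0 * y + ζ 1 * x))) ^ 2
          = ((1 / q) ^ 2 * (x ^ 2 + y ^ 2)) * (t ^ 2 * (ζ 0 ^ 2 + ζ 1 ^ 2)) := by ring
      rw [e]
      have e1 : t ^ 2 * (ζ 0 ^ 2 + ζ 1 ^ 2) ≤ 1 :=
        mul_le_one₀ (pow_le_one₀ ht0.le ht1.le) (by positivity) hζ2.le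
      have e2 : 0 ≤ t ^ 2 * (ζ 0 ^ 2 + ζ 1 ^ 2) := by positivity
      have e3 : 0 ≤ (1 / q) ^ 2 * (x ^ 2 + y ^ 2) := by positivity
      nlinarith)).1
    convert this using 1
    rw [hm]
    module
  · simp [hlu, hlm]
  · simp [hlm]
  · intro ε hε hmem
    have hmem' : u + (t * (1 + ε)) • m ∈ closure D := by
      convert hmem using 1
      module
    set τ := t * (1 + ε) with hτ
    have hτt : t < τ := by rw [hτ]; nlinarith
    have hτ0 : 0 < τ := ht0.trans hτt
    have hmin : min τ 1 ∈ Icc (0 : ℝ) 1 ∩ {t | u + t • m ∈ closure D} := by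
      refine ⟨⟨le_min hτ0.le zero_le_one, min_le_right _ _⟩, ?_⟩
      have h := hConv.closure.add_smul_sub_mem huD hmem' (t := min τ 1 / τ)
        ⟨by positivity, by rw [div_le_one hτ0]; exact min_le_left _ _⟩
      rw [add_sub_cancel_left, smul_smul, div_mul_cancel₀ _ hτ0.ne'] at h
      exact h
    exact absurd (htmax hmin) (not_le.mpr (lt_min hτt ht1))
end
end

section
/- Let d ≥ 3 and let D ⊂ ℝ^d be a bounded domain with C² boundary which admits a minimal plurisubharmonic defining function. Then the boundary ∂D is connected. -/
/-! Suppose first that the complement of `D` splits into disjoint closed pieces `K` and `K'`.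
Since the exterior of a large ball is connected, one piece, say `K`, is compact and nonempty.
Fix a center `o ∈ D` and a point `p ∈ K` at maximal distance `r` from `o`. Near `p`, all points
outside the ball `B(o, r)` belong to `D`, so `u < 0` there while `u p = 0`. Hence the gradient of
`u` at `p` is a negative multiple of `p - o`, and comparing `u` with the sphere shows that the
Hessian of `u` is negative on every nonzero vector tangent to the sphere. As `d ≥ 3`, there are two
orthonormal tangent vectors, which contradicts minimal plurisubharmonicity
(`no_compact_piece_of_compl`). So `Dᶜ` is connected.

It remains to see that an open connected set with connected complement has connected boundary
(`isPreconnected_frontier_of_compl`); this is the unicoherence of a simply connected space. If the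
frontier were a disjoint union of closed sets `A` and `B`, take `φ` continuous, equal to `0` on `A`
and to `1` on `B`. The circle-valued map equal to `exp (2π i φ)` on `D` and to `exp (-2π i φ)` off
`D` is continuous, hence lifts to a real function. Going from `A` to `B` inside `closure D` the lift
increases by `2π`, inside `Dᶜ` it decreases by `2π`, a contradiction. -/


open scoped RealInnerProductSpace ENNReal
open Metric Set Filter

noncomputable section

/-- Unicoherence: in a simply connected, locally path connected normal space, an open connected set
with connected complement has connected frontier. -/
lemma isPreconnected_frontier_of_compl {X : Type*} [TopologicalSpace X] [NormalSpace X]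
    [SimplyConnectedSpace X] [LocallyPathConnectedSpace X] {D : Set X} (hO : IsOpen D)
    (hD : IsPreconnected D) (hC : IsPreconnected Dᶜ) : IsPreconnected (frontier D) := by
  rw [isPreconnected_closed_iff]
  intro t t' ht ht' hsub ⟨a, haf, hat⟩ ⟨b, hbf, hbt⟩
  by_contra hne
  have hdis : Disjoint (frontier D ∩ t) (frontier D ∩ t') := by
    rw [Set.disjoint_left]
    rintro x ⟨hx, hxt⟩ ⟨-, hxt'⟩
    exact hne ⟨x, hx, hxt, hxt'⟩
  obtain ⟨φ, hφ0, hφ1, -⟩ := exists_continuous_zero_one_of_isClosed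
    (isClosed_frontier.inter ht) (isClosed_frontier.inter ht') hdis
  have hexp : ∀ x ∈ frontier D,
      Circle.exp (2 * Real.pi * φ x) = Circle.exp (-(2 * Real.pi * φ x)) := by
    intro x hx
    rcases hsub hx with h | h
    · have : φ x = 0 := hφ0 ⟨hx, h⟩
      simp [this]
    · have : φ x = 1 := hφ1 ⟨hx, h⟩
      rw [this, mul_one, Circle.exp_neg, Circle.exp_two_pi, inv_one]
  classical
  let f : X → Circle := fun x => if x ∈ D then Circle.exp (2 * Real.pi * φ x)
    else Circle.exp (-(2 * Real.pi * φ x))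
  have hf : Continuous f := Continuous.if hexp (by fun_prop) (by fun_prop)
  have hfD : ∀ x ∈ closure D, f x = Circle.exp (2 * Real.pi * φ x) := by
    intro x hx
    by_cases h : x ∈ D
    · simp [f, h]
    · have : x ∈ frontier D := by rw [hO.frontier_eq]; exact ⟨hx, h⟩
      rw [hexp x this]; simp only [f, if_neg h]
  have hfC : ∀ x ∈ Dᶜ, f x = Circle.exp (-(2 * Real.pi * φ x)) := by
    intro x hx
    simp only [f, if_neg hx]
  have hfr : frontier D ⊆ closure D ∩ Dᶜ := by
    rw [hO.frontier_eq]; exact fun x hx => hx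
  have ha0 : φ a = 0 := hφ0 ⟨haf, hat⟩
  have hb1 : φ b = 1 := hφ1 ⟨hbf, hbt⟩
  have hfa : Circle.exp 0 = f a := by
    rw [hfC a (hfr haf).2, ha0]; simp
  obtain ⟨F, ⟨hFa, hF⟩, -⟩ :=
    Circle.isCoveringMap_exp.existsUnique_continuousMap_lifts ⟨f, hf⟩ a 0 hfa
  have hF' : ∀ x, Circle.exp (F x) = f x := fun x => congrFun hF x
  have h1 : EqOn F (fun x => 2 * Real.pi * φ x) (closure D) :=
    Circle.isCoveringMap_exp.eqOn_of_comp_eqOn hD.closure F.continuous.continuousOn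
      (by fun_prop) (fun x hx => by simp [hF' x, hfD x hx]) (hfr haf).1 (by simp [hFa, ha0])
  have h2 : EqOn F (fun x => -(2 * Real.pi * φ x)) Dᶜ :=
    Circle.isCoveringMap_exp.eqOn_of_comp_eqOn hC F.continuous.continuousOn
      (by fun_prop) (fun x hx => by simp [hF' x, hfC x hx]) (hfr haf).2 (by simp [hFa, ha0])
  have e1 := h1 (hfr hbf).1
  have e2 := h2 (hfr hbf).2
  simp only [hb1] at e1 e2
  linarith [Real.pi_pos]

lemma isPreconnected_norm_gt {d : ℕ} (hd : 2 ≤ d) {R : ℝ} (hR : 0 ≤ R) :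
    IsPreconnected {x : Euc d | R < ‖x‖} := by
  have hrank : 1 < Module.rank ℝ (Euc d) := by
    rw [← Module.finrank_eq_rank, finrank_euclideanSpace_fin]
    exact_mod_cast hd
  have him : {x : Euc d | R < ‖x‖} = (fun y : Euc d => (1 + R * ‖y‖⁻¹) • y) '' {0}ᶜ := by
    ext x
    constructor
    · intro hx
      have hx : R < ‖x‖ := hx
      have hx0 : 0 < ‖x‖ := hR.trans_lt hx
      have hc : 0 < 1 - R * ‖x‖⁻¹ := by
        rw [sub_pos, ← div_eq_mul_inv, div_lt_one hx0]; exact hx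
      refine ⟨(1 - R * ‖x‖⁻¹) • x, ?_, ?_⟩
      · simpa using ⟨hc.ne', norm_pos_iff.1 hx0⟩
      · have hs : ‖(1 - R * ‖x‖⁻¹) • x‖ = ‖x‖ - R := by
          rw [norm_smul, Real.norm_of_nonneg hc.le]; field_simp
        have : ‖x‖ - R ≠ 0 := by linarith
        simp only [hs, smul_smul]
        convert one_smul ℝ x using 2
        field_simp
        ring
    · rintro ⟨y, hy, rfl⟩
      have hy0 : 0 < ‖y‖ := norm_pos_iff.2 hy
      have : ‖(1 + R * ‖y‖⁻¹) • y‖ = ‖y‖ + R := by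
        rw [norm_smul, Real.norm_of_nonneg (by positivity)]; field_simp
      change R < ‖(1 + R * ‖y‖⁻¹) • y‖
      linarith
  rw [him]
  refine (isConnected_compl_singleton_of_one_lt_rank hrank 0).isPreconnected.image _ ?_
  have : ContinuousOn (fun y : Euc d => ‖y‖⁻¹) {0}ᶜ :=
    continuous_norm.continuousOn.inv₀ (fun y hy => norm_ne_zero_iff.2 hy)
  fun_prop

/-- The comparison of `u` with the sphere of center `p - n` through `p`: if `u` is negative outside
that sphere near `p` and `u p = 0`, then the derivative in a unit tangent direction `v` vanishes and
the Hessian in that direction is at most a positive multiple of the radial derivative. The test curve `t ↦ p + t v - t² n / (4 ‖n‖²)`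
is tangent to the sphere at `p` and lies outside of it. -/
lemma hessQ_le_of_outside_neg {d : ℕ} {u : Euc d → ℝ} {p n v : Euc d} (hn : n ≠ 0)
    (hu : ContDiffAt ℝ 2 u p) (hup : u p = 0)
    (hout : ∀ᶠ x in nhds p, ‖n‖ < ‖x - p + n‖ → u x < 0)
    (hv : ‖v‖ = 1) (hvn : ⟪n, v⟫ = 0) :
    fderiv ℝ u p v = 0 ∧ hessQ u p v ≤ (1 / (2 * ‖n‖ ^ 2)) * fderiv ℝ u p n := by
  set a : ℝ := 1 / (4 * ‖n‖ ^ 2) with ha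
  have hn0 : 0 < ‖n‖ := norm_pos_iff.2 hn
  let q : ℝ → Euc d := fun t => p + t • v - (a * t ^ 2) • n
  have hq0 : q 0 = p := by simp [q]
  have hqd : ∀ t, HasDerivAt q (v - (a * (2 * t)) • n) t := by
    intro t
    have h1 : HasDerivAt (fun t : ℝ => t • v) ((1 : ℝ) • v) t := (hasDerivAt_id t).smul_const v
    have h2 : HasDerivAt (fun t : ℝ => (a * t ^ 2) • n) ((a * (2 * t)) • n) t := by
      have := ((hasDerivAt_pow 2 t).const_mul a).smul_const n
      simpa using this
    have h3 := (h1.const_add p).sub h2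
    rw [one_smul] at h3
    exact h3
  have hqc : Tendsto q (nhds 0) (nhds p) := by
    have := (hqd 0).continuousAt.tendsto
    rwa [hq0] at this
  have hqout : ∀ t ≠ 0, ‖n‖ < ‖q t - p + n‖ := by
    intro t ht
    have e : q t - p + n = (1 - a * t ^ 2) • n + t • v := by
      simp only [q, sub_smul, one_smul]; abel
    have e2 : ‖q t - p + n‖ ^ 2 = (1 - a * t ^ 2) ^ 2 * ‖n‖ ^ 2 + t ^ 2 := by
      rw [e, norm_add_sq_real, norm_smul, norm_smul, inner_smul_left, inner_smul_right, hvn, hv]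
      simp [mul_pow]
    have han : a * ‖n‖ ^ 2 = 1 / 4 := by rw [ha]; field_simp
    have ht2 : 0 < t ^ 2 := by positivity
    refine lt_of_pow_lt_pow_left₀ 2 (norm_nonneg _) ?_
    rw [e2]
    have : (1 - a * t ^ 2) ^ 2 * ‖n‖ ^ 2
        = ‖n‖ ^ 2 - 2 * (a * ‖n‖ ^ 2) * t ^ 2 + (a * t ^ 2) ^ 2 * ‖n‖ ^ 2 := by ring
    rw [this, han]
    have : 0 ≤ (a * t ^ 2) ^ 2 * ‖n‖ ^ 2 := by positivity
    linarith
  let g : ℝ → ℝ := fun t => u (q t)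
  have hg0 : g 0 = 0 := by simp [g, hq0, hup]
  have hgneg : ∀ᶠ t in nhds (0 : ℝ), t ≠ 0 → g t < 0 := by
    filter_upwards [hqc.eventually hout] with t ht h0
    exact ht (hqout t h0)
  have hmax : IsLocalMax g 0 := by
    filter_upwards [hgneg] with t ht
    by_cases h0 : t = 0
    · rw [h0]
    · rw [hg0]; exact (ht h0).le
  have hdiff : ∀ᶠ x in nhds p, DifferentiableAt ℝ u x := by
    filter_upwards [hu.eventually (by simp)] with x hx
    exact hx.differentiableAt (by simp)
  have hgd : ∀ᶠ t in nhds (0 : ℝ), HasDerivAt g (fderiv ℝ u (q t) (v - (a * (2 * t)) • n)) t := by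
    filter_upwards [hqc.eventually hdiff] with t ht
    exact ht.hasFDerivAt.comp_hasDerivAt t (hqd t)
  have hg1 : HasDerivAt g (fderiv ℝ u p v) 0 := by
    simpa [hq0] using hgd.self_of_nhds
  have hzero : fderiv ℝ u p v = 0 := hmax.hasDerivAt_eq_zero hg1
  refine ⟨hzero, ?_⟩
  have hfd : DifferentiableAt ℝ (fderiv ℝ u) p :=
    (hu.fderiv_right (m := 1) (by norm_num)).differentiableAt (by simp)
  have hhess : hessQ u p v = fderiv ℝ (fderiv ℝ u) p v v := by
    unfold hessQ
    rw [fderiv_clm_apply hfd (differentiableAt_const v)]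
    simp
  have hgd2 : HasDerivAt (fun t => fderiv ℝ u (q t) (v - (a * (2 * t)) • n))
      (fderiv ℝ (fderiv ℝ u) p v v + fderiv ℝ u p (-((a * 2) • n))) 0 := by
    have hfd' : HasFDerivAt (fderiv ℝ u) (fderiv ℝ (fderiv ℝ u) p) (q 0) := by
      rw [hq0]; exact hfd.hasFDerivAt
    have h1 : HasDerivAt (fun t => fderiv ℝ u (q t)) (fderiv ℝ (fderiv ℝ u) p v) 0 := by
      have := hfd'.comp_hasDerivAt (0 : ℝ) (hqd 0)
      rw [mul_zero, mul_zero, zero_smul, sub_zero] at this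
      exact this
    have h2 : HasDerivAt (fun t : ℝ => v - (a * (2 * t)) • n) (-((a * 2) • n)) 0 := by
      have := ((((hasDerivAt_id (0 : ℝ)).const_mul 2).const_mul a).smul_const n).const_sub v
      simpa using this
    simpa [hq0] using h1.clm_apply h2
  have hdd : deriv (deriv g) 0 = hessQ u p v - (a * 2) * fderiv ℝ u p n := by
    have : deriv g =ᶠ[nhds 0] fun t => fderiv ℝ u (q t) (v - (a * (2 * t)) • n) := by
      filter_upwards [hgd] with t ht using ht.deriv
    rw [this.deriv_eq, hgd2.deriv, hhess]
    simp [sub_eq_add_neg]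
  by_contra hcon
  have hpos : 0 < deriv (deriv g) 0 := by
    rw [hdd]
    have : a * 2 = 1 / (2 * ‖n‖ ^ 2) := by rw [ha]; field_simp; norm_num
    rw [this]; linarith
  -- The second derivative test makes `0` a local minimum of `g`, against `g t < 0 = g 0`.
  have hmin := isLocalMin_of_deriv_deriv_pos hpos (hg1.deriv.trans hzero) hg1.continuousAt
  have hev : ∀ᶠ t in nhdsWithin (0 : ℝ) {0}ᶜ, False := by
    filter_upwards [(hmin.and hgneg).filter_mono nhdsWithin_le_nhds, self_mem_nhdsWithin]
      with t ht h0
    have := ht.2 h0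
    rw [hg0] at ht
    linarith [ht.1]
  exact hev.exists.elim fun _ h => h

/-- The complement of `D` has no compact open-closed piece `K`: the contradiction occurs at a point
of `K` farthest from a center in `D`. -/
lemma no_compact_piece_of_compl {d : ℕ} (hd : 3 ≤ d) {D : Set (Euc d)} (hne : D.Nonempty)
    {U : Set (Euc d)} {u : Euc d → ℝ} (hU : IsOpen U) (hfr : frontier D ⊆ U)
    (hu : ContDiffOn ℝ 2 u U)
    (hneg : D ∩ U = {x | x ∈ U ∧ u x < 0})
    (hzero : frontier D = {x | x ∈ U ∧ u x = 0})
    (hgrad : ∀ x ∈ frontier D, fderiv ℝ u x ≠ 0)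
    (hmpsh : ∀ x ∈ U, ∀ v w : Euc d, ‖v‖ = 1 → ‖w‖ = 1 → ⟪v, w⟫ = 0 →
      0 ≤ hessQ u x v + hessQ u x w)
    {K K' : Set (Euc d)} (hK : IsCompact K) (hKne : K.Nonempty) (hK' : IsClosed K')
    (hdis : Disjoint K K') (hun : Dᶜ = K ∪ K') : False := by
  obtain ⟨o, ho⟩ := hne
  obtain ⟨p, hpK, hpmax⟩ := hK.exists_isMaxOn hKne
    (f := fun x => ‖x - o‖) (by fun_prop)
  have hpD : p ∉ D := by
    have : p ∈ Dᶜ := by rw [hun]; exact Or.inl hpK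
    exact this
  set n := p - o with hn_def
  have hn : n ≠ 0 := by
    intro h
    rw [sub_eq_zero.1 h] at hpD
    exact hpD ho
  have hn0 : 0 < ‖n‖ := norm_pos_iff.2 hn
  have hoD : ∀ᶠ x in nhds p, ‖n‖ < ‖x - p + n‖ → x ∈ D := by
    filter_upwards [hK'.isOpen_compl.mem_nhds (Set.disjoint_left.1 hdis hpK)] with x hx hlt
    by_contra hxD
    have : x ∈ K ∪ K' := by rw [← hun]; exact hxD
    rcases this with h | h
    · have h' : ‖x - o‖ ≤ ‖p - o‖ := hpmax h
      have e : x - p + n = x - o := by rw [hn_def]; abel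
      rw [e] at hlt
      exact absurd hlt (not_lt.2 h')
    · exact hx h
  -- The radial curve `t ↦ p + t n`, `t > 0`, approaches `p` from outside the sphere.
  have hray : HasDerivAt (fun t : ℝ => p + t • n) n 0 := by
    simpa using ((hasDerivAt_id (0 : ℝ)).smul_const n).const_add p
  have hrayc : Tendsto (fun t : ℝ => p + t • n) (nhdsWithin 0 (Ioi 0)) (nhds p) := by
    have := hray.continuousAt.tendsto
    simp only [zero_smul, add_zero] at this
    exact this.mono_left nhdsWithin_le_nhds
  have hrayout : ∀ t : ℝ, 0 < t → ‖n‖ < ‖(p + t • n) - p + n‖ := by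
    intro t ht
    have e : (p + t • n) - p + n = (t + 1) • n := by rw [add_smul, one_smul]; abel
    rw [e, norm_smul, Real.norm_of_nonneg (by linarith)]
    nlinarith
  have hpfr : p ∈ frontier D := by
    refine ⟨?_, fun h => hpD (interior_subset h)⟩
    refine mem_closure_of_tendsto hrayc ?_
    filter_upwards [hrayc.eventually hoD, self_mem_nhdsWithin] with t h ht
    exact h (hrayout t ht)
  have hpU := hfr hpfr
  have hup : u p = 0 := by rw [hzero] at hpfr; exact hpfr.2
  have huc : ContDiffAt ℝ 2 u p := hu.contDiffAt (hU.mem_nhds hpU)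
  have hout : ∀ᶠ x in nhds p, ‖n‖ < ‖x - p + n‖ → u x < 0 := by
    filter_upwards [hoD, hU.mem_nhds hpU] with x hx hxU hlt
    have : x ∈ D ∩ U := ⟨hx hlt, hxU⟩
    rw [hneg] at this
    exact this.2
  have key := fun v hv hvn => hessQ_le_of_outside_neg (v := v) hn huc hup hout hv hvn
  have hrad_le : fderiv ℝ u p n ≤ 0 := by
    have hd1 : HasDerivAt (fun t : ℝ => u (p + t • n)) (fderiv ℝ u p n) 0 := by
      have h : HasFDerivAt u (fderiv ℝ u p) (p + (0 : ℝ) • n) := by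
        simpa using (huc.differentiableAt (by simp)).hasFDerivAt
      exact h.comp_hasDerivAt (0 : ℝ) hray
    have hs := (hasDerivAt_iff_tendsto_slope.1 hd1).mono_left
      (nhdsWithin_mono 0 (s := Ioi 0) (fun t (ht : 0 < t) => ht.ne'))
    refine le_of_tendsto hs ?_
    filter_upwards [hrayc.eventually hout, self_mem_nhdsWithin] with t h ht
    have h' := h (hrayout t ht)
    have ht' : (0 : ℝ) < t := ht
    rw [slope_def_field]
    simp only [zero_smul, add_zero, hup, sub_zero]
    exact (div_neg_of_neg_of_pos h' ht').le
  have hrad_ne : fderiv ℝ u p n ≠ 0 := by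
    intro h0
    apply hgrad p hpfr
    ext x
    -- Decompose `x` into its radial part and a tangential remainder `y`.
    set c : ℝ := ⟪n, x⟫ / ‖n‖ ^ 2
    set y := x - c • n with hy
    have hny : ⟪n, y⟫ = 0 := by
      rw [hy, inner_sub_right, inner_smul_right, real_inner_self_eq_norm_sq]
      simp only [c]; field_simp; ring
    have hfy : fderiv ℝ u p y = 0 := by
      by_cases hy0 : y = 0
      · simp [hy0]
      · have hyn : ‖y‖ ≠ 0 := norm_ne_zero_iff.2 hy0
        have := (key (‖y‖⁻¹ • y) (by rw [norm_smul]; simp [hyn])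
          (by rw [inner_smul_right, hny, mul_zero])).1
        rw [map_smul, smul_eq_mul, mul_eq_zero] at this
        exact this.resolve_left (inv_ne_zero hyn)
    have hx : x = y + c • n := by rw [hy]; abel
    rw [hx, map_add, map_smul, hfy, h0]; simp
  have hrad : fderiv ℝ u p n < 0 := lt_of_le_of_ne hrad_le hrad_ne
  -- Two orthonormal vectors tangent to the sphere exist because `d - 1 ≥ 2`.
  obtain ⟨v, w, hv, hw, hvw, hnv, hnw⟩ : ∃ v w : Euc d, ‖v‖ = 1 ∧ ‖w‖ = 1 ∧ ⟪v, w⟫ = 0 ∧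
      ⟪n, v⟫ = 0 ∧ ⟪n, w⟫ = 0 := by
    let S := (ℝ ∙ n)ᗮ
    have hfin : 2 ≤ Module.finrank ℝ S := by
      have h1 := (ℝ ∙ n).finrank_add_finrank_orthogonal
      rw [finrank_span_singleton hn, finrank_euclideanSpace_fin] at h1
      change 2 ≤ Module.finrank ℝ (ℝ ∙ n)ᗮ
      omega
    let b := stdOrthonormalBasis ℝ S
    let i : Fin (Module.finrank ℝ S) := ⟨0, by omega⟩
    let j : Fin (Module.finrank ℝ S) := ⟨1, by omega⟩
    have hij : i ≠ j := by simp [i, j, Fin.ext_iff]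
    have hmem : ∀ k, ⟪n, (b k : Euc d)⟫ = 0 := fun k =>
      Submodule.mem_orthogonal_singleton_iff_inner_right.1 (b k).2
    refine ⟨b i, b j, b.orthonormal.1 i, b.orthonormal.1 j, b.orthonormal.2 hij, hmem i, hmem j⟩
  have h1 := (key v hv hnv).2
  have h2 := (key w hw hnw).2
  have h3 := hmpsh p hpU v w hv hw hvw
  have h4 : 1 / (2 * ‖n‖ ^ 2) * fderiv ℝ u p n < 0 :=
    mul_neg_of_pos_of_neg (by positivity) hrad
  linarith

/-- A bounded domain in `ℝ^d` (`d ≥ 3`) with `C²` boundary admitting a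
minimal plurisubharmonic defining function has connected boundary. -/
theorem boundary_connected_of_mpsh_defining_function
    (d : ℕ) (hd : 3 ≤ d) (D : Set (Euc d))
    (hOpen : IsOpen D) (hConn : IsConnected D) (hBdd : Bornology.IsBounded D)
    (U : Set (Euc d)) (u : Euc d → ℝ) (hU : IsOpen U) (hfr : frontier D ⊆ U)
    (hu : ContDiffOn ℝ 2 u U)
    (hneg : D ∩ U = {x | x ∈ U ∧ u x < 0})
    (hzero : frontier D = {x | x ∈ U ∧ u x = 0})
    (hgrad : ∀ x ∈ frontier D, fderiv ℝ u x ≠ 0)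
    (hmpsh : ∀ x ∈ U, ∀ v w : Euc d, ‖v‖ = 1 → ‖w‖ = 1 → ⟪v, w⟫ = 0 →
      0 ≤ hessQ u x v + hessQ u x w) :
    IsConnected (frontier D) := by
  refine ⟨?_, ?_⟩
  · have : Nonempty (Fin d) := ⟨⟨0, by omega⟩⟩
    refine nonempty_frontier_iff.2 ⟨hConn.nonempty, ?_⟩
    rintro rfl
    exact NormedSpace.unbounded_univ ℝ (Euc d) hBdd
  · refine isPreconnected_frontier_of_compl hOpen hConn.isPreconnected ?_
    obtain ⟨R, hR0, hR⟩ := hBdd.exists_pos_norm_le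
    have hext : {x : Euc d | R < ‖x‖} ⊆ Dᶜ := fun x hx hxD => absurd (hR x hxD) (not_le.2 hx)
    -- A closed piece of the complement that misses the exterior of the ball is compact.
    have main : ∀ t t' : Set (Euc d), IsClosed t → IsClosed t' → Dᶜ ⊆ t ∪ t' →
        (Dᶜ ∩ t).Nonempty → ¬ (Dᶜ ∩ (t ∩ t')).Nonempty → {x : Euc d | R < ‖x‖} ⊆ t' → False := by
      intro t t' ht ht' hsub hne hemp hsub'
      have hcl : IsClosed Dᶜ := hOpen.isClosed_compl
      refine no_compact_piece_of_compl hd hConn.nonempty hU hfr hu hneg hzero hgrad hmpsh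
        (K := Dᶜ ∩ t) (K' := Dᶜ ∩ t') ?_ hne (hcl.inter ht') ?_ ?_
      · refine (isCompact_closedBall (0 : Euc d) R).of_isClosed_subset (hcl.inter ht) ?_
        rintro x ⟨hxD, hxt⟩
        rw [mem_closedBall_zero_iff]
        by_contra hlt
        exact hemp ⟨x, hxD, hxt, hsub' (not_le.1 hlt)⟩
      · rw [Set.disjoint_left]
        rintro x ⟨hxD, hxt⟩ ⟨-, hxt'⟩
        exact hemp ⟨x, hxD, hxt, hxt'⟩
      · rw [← Set.inter_union_distrib_left, Set.inter_eq_left.2 hsub]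
    rw [isPreconnected_closed_iff]
    intro t t' ht ht' hsub hne hne'
    by_contra hemp
    have hE := isPreconnected_closed_iff.1
      (isPreconnected_norm_gt (d := d) (by omega) hR0.le) t t' ht ht' (hext.trans hsub)
    by_cases h1 : ({x : Euc d | R < ‖x‖} ∩ t).Nonempty
    · by_cases h2 : ({x : Euc d | R < ‖x‖} ∩ t').Nonempty
      · obtain ⟨x, hx, hxt⟩ := hE h1 h2
        exact hemp ⟨x, hext hx, hxt⟩
      · refine main t' t ht' ht (by rwa [Set.union_comm]) hne' (by rwa [Set.inter_comm t' t]) ?_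
        exact fun x hx => (hsub (hext hx)).resolve_right fun h => h2 ⟨x, hx, h⟩
    · refine main t t' ht ht' hsub hne hemp ?_
      exact fun x hx => (hsub (hext hx)).resolve_left fun h => h1 ⟨x, hx, h⟩
end
end
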